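/- arXiv:1309.0545 — 7 statements merged into one kernel-verified Lean document; each statement's English description precedes it below -/
import Mathlib

section
/- Let κ be a field, let n ≤ r be positive integers, and let s = (s₁,…,s_d) be a sequence of nonnegative integers with s₁+⋯+s_d = n. For any matrix A ∈ Mat_{n×r}(κ) of rank n there exists a unique g ∈ P_s such that gA is in row echelon form with respect to s. -/
/-! For a subspace `V` of `κ^r` let `L(V)` (`pivots V`) be the set of positions of the rightmost
nonzero entries of the nonzero vectors of `V`. A vector of `V` vanishing on `L(V)` is zero, and
for each `j ∈ L(V)` there is a vector of `V` with pivot `1` at `j` that vanishes at the other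
elements of `L(V)` (`exists_reduced`). Hence evaluation `V → κ^{L(V)}` is an isomorphism and
`|L(V)| = dim V` (`card_pivots`). If vectors `B i` have pairwise distinct pivots `p i`, then the
pivots of their span are exactly the `p i` (`pivots_span`).

Left multiplication by an element of `P_s` preserves the spans `V_k` of the rows of `A` lying in
block `k` or above it (`span_mul_eq`). Write `W_k` for the span of the rows strictly above block `k`.

*Existence.* As the rows of `A` are independent, `L(V_k) \ L(W_k)` has as many elements as block
`k` has rows. Listing it increasingly gives pivots `p i` for the rows of block `k`, and the reduced
vectors of `V_k` at these pivots are the rows of a matrix `B` in echelon form. Expressing them in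
the rows of `A` gives `g`.

*Uniqueness.* If `B = gA` is in echelon form, then the pivots of the rows of `B` in block `k` are
`L(V_k) \ L(W_k)`, so they are determined by `A`. For another such `B'`, the difference of
the rows `i` of `B` and `B'` lies in `V_k` and vanishes on `L(V_k)`, so it is zero; as `A` has
independent rows, `gA = g'A` forces `g = g'`. -/

/-! Row echelon form with respect to a sequence of block sizes
`s = (s₁, …, s_d)` with `s₁ + ⋯ + s_d = n`: the rows of an `n × r` matrix are
grouped into `d` consecutive blocks, the first (top) block consisting of the
first `s_d` rows, …, the last block consisting of the final `s₁` rows. -/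

/-- The first row index of the block corresponding to `s b` (rows are grouped
top to bottom in blocks of sizes `s_d, s_{d-1}, …, s₁`). -/
def blockStart {d : ℕ} (s : Fin d → ℕ) (b : Fin d) : ℕ :=
  ∑ j ∈ Finset.univ.filter (fun j => b < j), s j

/-- `x` is a (0-indexed) row index belonging to the block corresponding to `s b`. -/
def inBlock {d : ℕ} (s : Fin d → ℕ) (b : Fin d) (x : ℕ) : Prop :=
  blockStart s b ≤ x ∧ x < blockStart s b + s b

/-- `x` and `y` belong to the same block. -/
def sameBlock {d : ℕ} (s : Fin d → ℕ) (x y : ℕ) : Prop :=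
  ∃ b, inBlock s b x ∧ inBlock s b y

/-- Membership in the parabolic subgroup `P_s ⊆ GL_n(κ)` of invertible block
lower triangular matrices for the block sizes `(s_d, …, s₁)`: the entry `g i j`
vanishes whenever the block of row `i` lies strictly above the block of
column `j`. -/
def memP {κ : Type} [Field κ] {d n : ℕ} (s : Fin d → ℕ)
    (g : Matrix (Fin n) (Fin n) κ) : Prop :=
  IsUnit g ∧ ∀ b b' : Fin d, b' < b → ∀ i j : Fin n,
    inBlock s b i.val → inBlock s b' j.val → g i j = 0

/-- `A` is in row echelon form with respect to `s`: each row has a pivot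
(rightmost nonzero entry) equal to `1`, all entries beneath any pivot vanish,
and within each block of rows the pivots move to the right as the row index
increases. -/
def IsRowEchelon {κ : Type} [Field κ] {d n r : ℕ} (s : Fin d → ℕ)
    (A : Matrix (Fin n) (Fin r) κ) : Prop :=
  ∃ p : Fin n → Fin r,
    (∀ i, A i (p i) = 1) ∧
    (∀ i j, p i < j → A i j = 0) ∧
    (∀ i i' : Fin n, i < i' → A i' (p i) = 0) ∧
    (∀ i i' : Fin n, sameBlock s i.val i'.val → (i < i' ↔ p i < p i'))

/-! ### Blocks of rows -/

theorem blockStart_add_le {d : ℕ} (s : Fin d → ℕ) {b b' : Fin d} (h : b' < b) :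
    blockStart s b + s b ≤ blockStart s b' := by
  unfold blockStart
  rw [add_comm, ← Finset.sum_insert (by simp)]
  apply Finset.sum_le_sum_of_subset
  intro j hj
  simp only [Finset.mem_insert, Finset.mem_filter, Finset.mem_univ, true_and] at hj ⊢
  rcases hj with rfl | hj
  · exact h
  · exact h.trans hj

theorem exists_inBlock {d : ℕ} (s : Fin d → ℕ) (x : ℕ) (hx : x < ∑ b, s b) :
    ∃ b, inBlock s b x := by
  classical
  have hd : 0 < d := by
    rcases Nat.eq_zero_or_pos d with rfl | h
    · simp at hx
    · exact h
  -- The block of `x` is the one with the largest start `≤ x`, i.e. with the smallest index.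
  obtain ⟨b, hb, hmin⟩ := (Finset.univ.filter (fun b => blockStart s b ≤ x)).exists_min_image id
    ⟨⟨d - 1, by omega⟩, by
      refine Finset.mem_filter.mpr ⟨Finset.mem_univ _, ?_⟩
      unfold blockStart
      rw [Finset.sum_eq_zero]
      · exact Nat.zero_le _
      · intro j hj
        simp only [Finset.mem_filter, Finset.mem_univ, true_and, Fin.lt_def] at hj
        omega⟩
  simp only [Finset.mem_filter, Finset.mem_univ, true_and, id] at hb hmin
  refine ⟨b, hb, ?_⟩
  have key : blockStart s b + s b = ∑ j ∈ Finset.univ.filter (fun j => b ≤ j), s j := by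
    unfold blockStart
    rw [add_comm, ← Finset.sum_insert (by simp)]
    congr 1
    ext j
    simp only [Finset.mem_insert, Finset.mem_filter, Finset.mem_univ, true_and]
    rw [le_iff_eq_or_lt, eq_comm]
  rw [key]
  by_cases h0 : b.val = 0
  · rw [Finset.filter_true_of_mem]
    · exact hx
    · intro j _
      rw [Fin.le_def]
      omega
  · by_contra hlt
    have := hmin ⟨b.val - 1, by omega⟩ (by
      refine le_trans (le_of_eq ?_) (not_lt.mp hlt)
      unfold blockStart
      congr 1
      ext j
      simp only [Finset.mem_filter, Finset.mem_univ, true_and, Fin.lt_def, Fin.le_def]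
      omega)
    rw [Fin.le_def] at this
    simp only at this
    omega

/-- The block of each row, as an antitone function of the row: blocks of larger index
lie higher up. -/
theorem exists_block {d n : ℕ} (s : Fin d → ℕ) (hs : ∑ b, s b = n) :
    ∃ β : Fin n → Fin d, (∀ (b : Fin d) (i : Fin n), inBlock s b i.val ↔ β i = b) ∧
      ∀ i j : Fin n, i ≤ j → β j ≤ β i := by
  choose β hβ using fun i : Fin n => exists_inBlock s i.val (hs ▸ i.isLt)
  have anti : ∀ (b b' : Fin d) (x y : ℕ), inBlock s b x → inBlock s b' y → x ≤ y → b' ≤ b := by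
    intro b b' x y hx hy hxy
    by_contra h
    have := blockStart_add_le s (not_le.mp h)
    unfold inBlock at hx hy
    omega
  refine ⟨β, fun b i => ⟨fun h => ?_, fun h => h ▸ hβ i⟩,
    fun i j hij => anti _ _ _ _ (hβ i) (hβ j) hij⟩
  exact le_antisymm (anti _ _ _ _ h (hβ i) le_rfl) (anti _ _ _ _ (hβ i) h le_rfl)

/-! ### Pivots of a subspace -/

section Pivots

variable {κ : Type} [Field κ] {r : ℕ}

open Classical in
/-- The set of positions of the rightmost nonzero entries of the nonzero vectors of `V`. -/
noncomputable def pivots (V : Submodule κ (Fin r → κ)) : Finset (Fin r) :=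
  Finset.univ.filter fun j => ∃ v ∈ V, v j ≠ 0 ∧ ∀ j', j < j' → v j' = 0

theorem mem_pivots {V : Submodule κ (Fin r → κ)} {j : Fin r} :
    j ∈ pivots V ↔ ∃ v ∈ V, v j ≠ 0 ∧ ∀ j', j < j' → v j' = 0 := by
  simp [pivots]

theorem pivots_mono {V W : Submodule κ (Fin r → κ)} (h : V ≤ W) : pivots V ⊆ pivots W := by
  intro j hj
  rw [mem_pivots] at hj ⊢
  obtain ⟨v, hv, h'⟩ := hj
  exact ⟨v, h hv, h'⟩

theorem eq_zero_of_pivots {V : Submodule κ (Fin r → κ)} {v : Fin r → κ} (hv : v ∈ V)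
    (h : ∀ j ∈ pivots V, v j = 0) : v = 0 := by
  classical
  by_contra hne
  obtain ⟨j₀, hj₀⟩ := Function.ne_iff.mp hne
  obtain ⟨j, hj, hmax⟩ := (Finset.univ.filter (fun j => v j ≠ 0)).exists_max_image id
    ⟨j₀, by simpa using hj₀⟩
  simp only [Finset.mem_filter, Finset.mem_univ, true_and, id] at hj hmax
  refine hj (h j (mem_pivots.mpr ⟨v, hv, hj, fun j' hj' => ?_⟩))
  by_contra hne'
  exact absurd (hmax j' hne') (not_le.mpr hj')

/-- The member of the reduced echelon basis of `V` with pivot `j`. -/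
theorem exists_reduced (V : Submodule κ (Fin r → κ)) (j : Fin r) (hj : j ∈ pivots V) :
    ∃ v ∈ V, v j = 1 ∧ (∀ j', j < j' → v j' = 0) ∧ ∀ j' ∈ pivots V, j' ≠ j → v j' = 0 := by
  classical
  induction j using WellFoundedLT.induction with
  | ind j ih =>
    choose! e heV he1 hegt hered using ih
    obtain ⟨v, hv, hvj, hvgt⟩ := mem_pivots.mp hj
    have hmem : ∀ {l}, l ∈ (pivots V).filter (· < j) ↔ l ∈ pivots V ∧ l < j := by
      intro l
      simp
    -- Scale `v` to have pivot `1`, then clear its entries at the smaller pivots.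
    refine ⟨(v j)⁻¹ • (v - ∑ l ∈ (pivots V).filter (· < j), v l • e l),
      V.smul_mem _ (V.sub_mem hv (V.sum_mem fun l hl =>
        V.smul_mem _ (heV l (hmem.mp hl).2 (hmem.mp hl).1))), ?_, ?_, ?_⟩
    · simp only [Pi.smul_apply, Pi.sub_apply, Finset.sum_apply, smul_eq_mul]
      rw [Finset.sum_eq_zero, sub_zero, inv_mul_cancel₀ hvj]
      intro l hl
      rw [hegt l (hmem.mp hl).2 (hmem.mp hl).1 j (hmem.mp hl).2, mul_zero]
    · intro j' hj'
      simp only [Pi.smul_apply, Pi.sub_apply, Finset.sum_apply, smul_eq_mul]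
      rw [Finset.sum_eq_zero, hvgt j' hj', sub_zero, mul_zero]
      intro l hl
      rw [hegt l (hmem.mp hl).2 (hmem.mp hl).1 j' ((hmem.mp hl).2.trans hj'), mul_zero]
    · intro j' hj' hne
      simp only [Pi.smul_apply, Pi.sub_apply, Finset.sum_apply, smul_eq_mul]
      rcases lt_or_gt_of_ne hne with hlt | hgt
      · rw [Finset.sum_eq_single j']
        · rw [he1 j' hlt hj', mul_one, sub_self, mul_zero]
        · intro l hl hne'
          rw [hered l (hmem.mp hl).2 (hmem.mp hl).1 j' hj' hne'.symm, mul_zero]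
        · intro h
          exact absurd (hmem.mpr ⟨hj', hlt⟩) h
      · rw [Finset.sum_eq_zero, hvgt j' hgt, sub_zero, mul_zero]
        intro l hl
        rw [hegt l (hmem.mp hl).2 (hmem.mp hl).1 j' ((hmem.mp hl).2.trans hgt), mul_zero]

theorem card_pivots (V : Submodule κ (Fin r → κ)) :
    (pivots V).card = Module.finrank κ V := by
  classical
  let ev : V →ₗ[κ] (pivots V → κ) :=
    { toFun := fun v j => v.1 j.1
      map_add' := fun _ _ => rfl
      map_smul' := fun _ _ => rfl }
  have hinj : Function.Injective ev := by
    rw [← LinearMap.ker_eq_bot, LinearMap.ker_eq_bot']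
    intro v hv
    exact Subtype.ext (eq_zero_of_pivots v.2 fun j hj => congrFun hv ⟨j, hj⟩)
  have hsurj : Function.Surjective ev := by
    intro f
    choose e heV he1 hegt hered using exists_reduced V
    refine ⟨∑ l : pivots V, f l • ⟨e l.1 l.2, heV l.1 l.2⟩, ?_⟩
    rw [map_sum]
    ext j
    rw [Finset.sum_apply, Finset.sum_eq_single j]
    · simp [ev, he1]
    · intro l _ hl
      have : e l.1 l.2 j.1 = 0 := hered l.1 l.2 j.1 j.2 fun h => hl (Subtype.ext h.symm)
      simp [ev, this]
    · simp
  have := (LinearEquiv.ofBijective ev ⟨hinj, hsurj⟩).finrank_eq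
  rw [this, Module.finrank_fintype_fun_eq_card, Fintype.card_coe]

theorem exists_coeff {ι : Type} [Fintype ι] {B : ι → Fin r → κ} {S : Set ι} {v : Fin r → κ}
    (hv : v ∈ Submodule.span κ (B '' S)) :
    ∃ a : ι → κ, (∀ i, i ∉ S → a i = 0) ∧ v = ∑ i, a i • B i := by
  classical
  induction hv using Submodule.span_induction with
  | mem x hx =>
    obtain ⟨i, hi, rfl⟩ := hx
    refine ⟨Pi.single i 1, fun j hj => ?_, ?_⟩
    · rw [Pi.single_eq_of_ne]
      rintro rfl
      exact hj hi
    · rw [Finset.sum_eq_single i]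
      · simp
      · intro j _ hj
        simp [Pi.single_eq_of_ne hj]
      · simp
  | zero => exact ⟨0, by simp, by simp⟩
  | add x y _ _ hx hy =>
    obtain ⟨a, ha, rfl⟩ := hx
    obtain ⟨b, hb, rfl⟩ := hy
    exact ⟨a + b, fun i hi => by simp [ha i hi, hb i hi],
      by simp [add_smul, Finset.sum_add_distrib]⟩
  | smul c x _ hx =>
    obtain ⟨a, ha, rfl⟩ := hx
    exact ⟨c • a, fun i hi => by simp [ha i hi], by simp [mul_smul, Finset.smul_sum]⟩

/-- A nontrivial combination of vectors with distinct pivots has as pivot the rightmost pivot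
occurring in it. -/
theorem exists_pivot_sum {ι : Type} [Fintype ι] {B : ι → Fin r → κ} {p : ι → Fin r}
    (hp : Function.Injective p) (h1 : ∀ i, B i (p i) = 1) (h2 : ∀ i j, p i < j → B i j = 0)
    {a : ι → κ} (ha : a ≠ 0) :
    ∃ i, a i ≠ 0 ∧ (∑ l, a l • B l) (p i) ≠ 0 ∧ ∀ j, p i < j → (∑ l, a l • B l) j = 0 := by
  classical
  obtain ⟨i₀, hi₀⟩ := Function.ne_iff.mp ha
  obtain ⟨i, hi, hmax⟩ := (Finset.univ.filter (fun i => a i ≠ 0)).exists_max_image p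
    ⟨i₀, by simpa using hi₀⟩
  simp only [Finset.mem_filter, Finset.mem_univ, true_and] at hi hmax
  refine ⟨i, hi, ?_, ?_⟩
  · simp only [Finset.sum_apply, Pi.smul_apply, smul_eq_mul]
    rw [Finset.sum_eq_single i]
    · rwa [h1, mul_one]
    · intro l _ hl
      by_cases hal : a l = 0
      · rw [hal, zero_mul]
      · rw [h2 l _ (lt_of_le_of_ne (hmax l hal) fun h => hl (hp h)), mul_zero]
    · simp
  · intro j hj
    simp only [Finset.sum_apply, Pi.smul_apply, smul_eq_mul]
    refine Finset.sum_eq_zero fun l _ => ?_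
    by_cases hal : a l = 0
    · rw [hal, zero_mul]
    · rw [h2 l _ (lt_of_le_of_lt (hmax l hal) hj), mul_zero]

theorem pivots_span {ι : Type} [Fintype ι] {B : ι → Fin r → κ} {p : ι → Fin r}
    (hp : Function.Injective p) (h1 : ∀ i, B i (p i) = 1) (h2 : ∀ i j, p i < j → B i j = 0)
    (S : Set ι) (j : Fin r) :
    j ∈ pivots (Submodule.span κ (B '' S)) ↔ ∃ i ∈ S, p i = j := by
  rw [mem_pivots]
  constructor
  · rintro ⟨v, hv, hvj, hgt⟩
    obtain ⟨a, haS, rfl⟩ := exists_coeff hv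
    have ha : a ≠ 0 := by
      rintro rfl
      simp at hvj
    obtain ⟨i, hai, hi, higt⟩ := exists_pivot_sum hp h1 h2 ha
    refine ⟨i, by_contra fun h => hai (haS i h), ?_⟩
    rcases lt_trichotomy (p i) j with h | h | h
    · exact absurd (higt j h) hvj
    · exact h
    · exact absurd (hgt _ h) hi
  · rintro ⟨i, hi, rfl⟩
    exact ⟨B i, Submodule.subset_span ⟨i, hi, rfl⟩, by simp [h1], h2 i⟩

end Pivots

/-! ### Block triangular matrices and the flag of row spans -/

section Flag

variable {κ : Type} [Field κ] {n r d : ℕ}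

theorem mul_row (g : Matrix (Fin n) (Fin n) κ) (A : Matrix (Fin n) (Fin r) κ) (i : Fin n) :
    (g * A) i = ∑ j, g i j • A j := by
  ext l
  simp [Matrix.mul_apply, Finset.sum_apply]

theorem span_mul_le {β : Fin n → Fin d} {g : Matrix (Fin n) (Fin n) κ}
    (hg : g.BlockTriangular β) (A : Matrix (Fin n) (Fin r) κ) {S : Set (Fin n)}
    (hS : ∀ i j, i ∈ S → β i ≤ β j → j ∈ S) :
    Submodule.span κ ((g * A) '' S) ≤ Submodule.span κ (A '' S) := by
  rw [Submodule.span_le]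
  rintro _ ⟨i, hi, rfl⟩
  rw [mul_row]
  refine Submodule.sum_mem _ fun j _ => ?_
  by_cases h : β i ≤ β j
  · exact Submodule.smul_mem _ _ (Submodule.subset_span ⟨j, hS i j hi h, rfl⟩)
  · rw [hg (not_le.mp h), zero_smul]
    exact Submodule.zero_mem _

/-- An invertible block triangular matrix preserves the flag of row spans; `S` is a union of
topmost blocks. -/
theorem span_mul_eq {β : Fin n → Fin d} {g : Matrix (Fin n) (Fin n) κ} (hu : IsUnit g)
    (hg : g.BlockTriangular β) (A : Matrix (Fin n) (Fin r) κ) {S : Set (Fin n)}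
    (hS : ∀ i j, i ∈ S → β i ≤ β j → j ∈ S) :
    Submodule.span κ ((g * A) '' S) = Submodule.span κ (A '' S) := by
  refine le_antisymm (span_mul_le hg A hS) ?_
  have := hu.invertible
  have h := span_mul_le (Matrix.blockTriangular_inv_of_blockTriangular hg) (g * A) hS
  rwa [← Matrix.mul_assoc, Matrix.inv_mul_of_invertible, Matrix.one_mul] at h

/-- The echelon conditions with respect to an abstract block function `β` and a fixed
choice `p` of pivots. -/
def EchelonWith (β : Fin n → Fin d) (B : Matrix (Fin n) (Fin r) κ) (p : Fin n → Fin r) : Prop :=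
  (∀ i, B i (p i) = 1) ∧ (∀ i j, p i < j → B i j = 0) ∧
    (∀ i i' : Fin n, i < i' → B i' (p i) = 0) ∧
    (∀ i i' : Fin n, β i = β i' → (i < i' ↔ p i < p i'))

theorem EchelonWith.injective {β : Fin n → Fin d} {B : Matrix (Fin n) (Fin r) κ}
    {p : Fin n → Fin r} (h : EchelonWith β B p) : Function.Injective p := by
  intro i i' hii
  rcases lt_trichotomy i i' with hlt | heq | hlt
  · have := h.2.2.1 i i' hlt
    rw [hii, h.1] at this
    exact absurd this one_ne_zero
  · exact heq
  · have := h.2.2.1 i' i hlt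
    rw [← hii, h.1] at this
    exact absurd this one_ne_zero

theorem EchelonWith.apply_pivot {β : Fin n → Fin d} {B : Matrix (Fin n) (Fin r) κ}
    {p : Fin n → Fin r} (hβ : ∀ i j : Fin n, i ≤ j → β j ≤ β i)
    (h : EchelonWith β B p) {i j : Fin n} (hij : β i ≤ β j) :
    B i (p j) = if j = i then 1 else 0 := by
  split_ifs with hji
  · rw [hji, h.1]
  · rcases lt_or_gt_of_ne hji with hlt | hgt
    · exact h.2.2.1 j i hlt
    -- `j` lies below `i` and not in a lower block, hence in the same block, with pivot to the right.
    · exact h.2.1 i _ ((h.2.2.2 i j (le_antisymm hij (hβ i j hgt.le))).mp hgt)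

theorem range_pivot {β : Fin n → Fin d} {g : Matrix (Fin n) (Fin n) κ} (hu : IsUnit g)
    (hg : g.BlockTriangular β) {A : Matrix (Fin n) (Fin r) κ} {p : Fin n → Fin r}
    (h : EchelonWith β (g * A) p) (k : Fin d) :
    Set.range (fun i : {i // β i = k} => p i.1) =
      ↑(pivots (Submodule.span κ (A '' {i | k ≤ β i})) \
        pivots (Submodule.span κ (A '' {i | k < β i}))) := by
  ext j
  rw [← span_mul_eq hu hg A (S := {i | k ≤ β i}) (fun i j hi hj => le_trans hi hj),
    ← span_mul_eq hu hg A (S := {i | k < β i}) (fun i j hi hj => lt_of_lt_of_le hi hj)]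
  rw [Finset.mem_coe, Finset.mem_sdiff, pivots_span h.injective h.1 h.2.1,
    pivots_span h.injective h.1 h.2.1]
  constructor
  · rintro ⟨⟨i, hi⟩, rfl⟩
    refine ⟨⟨i, hi.ge, rfl⟩, ?_⟩
    rintro ⟨i', hi', heq⟩
    rw [h.injective heq] at hi'
    exact absurd hi (ne_of_gt hi')
  · rintro ⟨⟨i, hi, rfl⟩, hnot⟩
    exact ⟨⟨i, le_antisymm (not_lt.mp fun hlt => hnot ⟨i, hlt, rfl⟩) hi⟩, rfl⟩

theorem echelon_unique {β : Fin n → Fin d} (hβ : ∀ i j : Fin n, i ≤ j → β j ≤ β i)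
    {A : Matrix (Fin n) (Fin r) κ} (hA : LinearIndependent κ A)
    {g g' : Matrix (Fin n) (Fin n) κ} (hu : IsUnit g) (hu' : IsUnit g')
    (hg : g.BlockTriangular β) (hg' : g'.BlockTriangular β) {p p' : Fin n → Fin r}
    (h : EchelonWith β (g * A) p) (h' : EchelonWith β (g' * A) p') : g = g' := by
  have hpp : p = p' := by
    funext i
    have hr := (range_pivot hu hg h (β i)).trans (range_pivot hu' hg' h' (β i)).symm
    rw [StrictMono.range_inj] at hr
    · exact congrFun hr ⟨i, rfl⟩
    · intro x y hxy
      exact (h.2.2.2 _ _ (x.2.trans y.2.symm)).mp hxy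
    · intro x y hxy
      exact (h'.2.2.2 _ _ (x.2.trans y.2.symm)).mp hxy
  subst hpp
  have hB : ∀ i, (g * A) i = (g' * A) i := by
    intro i
    have hS : ∀ i' j, i' ∈ {l | β i ≤ β l} → β i' ≤ β j → j ∈ {l | β i ≤ β l} :=
      fun i' j hi hj => le_trans hi hj
    have hm : (g * A) i ∈ Submodule.span κ ((g * A) '' {l | β i ≤ β l}) :=
      Submodule.subset_span ⟨i, le_refl (β i), rfl⟩
    have hm' : (g' * A) i ∈ Submodule.span κ ((g' * A) '' {l | β i ≤ β l}) :=
      Submodule.subset_span ⟨i, le_refl (β i), rfl⟩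
    rw [span_mul_eq hu' hg' A hS, ← span_mul_eq hu hg A hS] at hm'
    refine sub_eq_zero.mp (eq_zero_of_pivots (Submodule.sub_mem _ hm hm') fun j hj => ?_)
    rw [pivots_span h.injective h.1 h.2.1] at hj
    obtain ⟨l, hl, rfl⟩ := hj
    rw [Pi.sub_apply, h.apply_pivot hβ hl, h'.apply_pivot hβ hl, sub_self]
  ext i j
  have := hB i
  rw [mul_row, mul_row, ← sub_eq_zero, ← Finset.sum_sub_distrib] at this
  simp only [← sub_smul] at this
  exact sub_eq_zero.mp (Fintype.linearIndependent_iff.mp hA _ this j)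

theorem card_pivots_rows {A : Fin n → Fin r → κ} (hA : LinearIndependent κ A)
    (S : Finset (Fin n)) : (pivots (Submodule.span κ (A '' (S : Set (Fin n))))).card = S.card := by
  rw [card_pivots]
  have h := finrank_span_eq_card (hA.comp (Subtype.val : S → Fin n) Subtype.val_injective)
  rw [Set.range_comp, Subtype.range_coe_subtype] at h
  simpa using h

/-- The pivots of block `k` are obtained by listing `L(V_k) \ L(W_k)` increasingly. -/
theorem exists_pivots (β : Fin n → Fin d) {A : Fin n → Fin r → κ}
    (hA : LinearIndependent κ A) (k : Fin d) :
    ∃ q : {i // β i = k} → Fin r, StrictMono q ∧ ∀ x,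
      q x ∈ pivots (Submodule.span κ (A '' {i | k ≤ β i})) ∧
      q x ∉ pivots (Submodule.span κ (A '' {i | k < β i})) := by
  classical
  have hc : (pivots (Submodule.span κ (A '' {i | k ≤ β i})) \
      pivots (Submodule.span κ (A '' {i | k < β i}))).card = Fintype.card {i // β i = k} := by
    rw [Finset.card_sdiff_of_subset (pivots_mono (Submodule.span_mono
      (Set.image_mono (show {i | k < β i} ⊆ {i | k ≤ β i} from
        Set.ofPred_subset_ofPred.mpr fun i hi => le_of_lt hi))))]
    have e1 := card_pivots_rows hA (Finset.univ.filter fun i => k ≤ β i)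
    have e2 := card_pivots_rows hA (Finset.univ.filter fun i => k < β i)
    simp only [Finset.coe_filter, Finset.mem_univ, true_and] at e1 e2
    rw [e1, e2, Fintype.card_subtype, ← Finset.card_sdiff_of_subset]
    · congr 1
      ext i
      simp only [Finset.mem_sdiff, Finset.mem_filter, Finset.mem_univ, true_and, not_lt]
      exact ⟨fun h => le_antisymm h.2 h.1, fun h => ⟨h.ge, h.le⟩⟩
    · intro i
      simp only [Finset.mem_filter, Finset.mem_univ, true_and]
      exact le_of_lt
  let e := (Fintype.orderIsoFinOfCardEq {i // β i = k} rfl).symm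
  let f := Finset.orderEmbOfFin _ hc
  refine ⟨fun x => f (e x), fun x y hxy => f.strictMono (e.strictMono hxy), fun x => ?_⟩
  exact Finset.mem_sdiff.mp (Finset.orderEmbOfFin_mem _ hc (e x))

theorem echelon_exists {β : Fin n → Fin d} (hβ : ∀ i j : Fin n, i ≤ j → β j ≤ β i)
    {A : Matrix (Fin n) (Fin r) κ} (hA : LinearIndependent κ A) :
    ∃ (g : Matrix (Fin n) (Fin n) κ) (p : Fin n → Fin r),
      IsUnit g ∧ g.BlockTriangular β ∧ EchelonWith β (g * A) p := by
  choose q hqmono hqV hqW using fun k => (by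
    obtain ⟨q, h1, h2⟩ := exists_pivots β hA k
    exact ⟨q, h1, fun x => (h2 x).1, fun x => (h2 x).2⟩ :
    ∃ q : {i // β i = k} → Fin r, StrictMono q ∧
      (∀ x, q x ∈ pivots (Submodule.span κ (A '' {i | k ≤ β i}))) ∧
      ∀ x, q x ∉ pivots (Submodule.span κ (A '' {i | k < β i})))
  let p : Fin n → Fin r := fun i => q (β i) ⟨i, rfl⟩
  have hpq : ∀ i k (h : β i = k), p i = q k ⟨i, h⟩ := by
    rintro i _ rfl
    rfl
  have hpV : ∀ i, p i ∈ pivots (Submodule.span κ (A '' {l | β i ≤ β l})) := fun i => hqV _ _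
  have hpW : ∀ i, p i ∉ pivots (Submodule.span κ (A '' {l | β i < β l})) := fun i => hqW _ _
  have hmono : ∀ i i', β i = β i' → (i < i' ↔ p i < p i') := by
    intro i i' h
    rw [hpq i (β i') h, (hqmono (β i')).lt_iff_lt]
    rfl
  have hne : ∀ i i', i < i' → p i ≠ p i' := by
    intro i i' hlt heq
    rcases (hβ i i' hlt.le).eq_or_lt with h | h
    · exact absurd ((hmono i i' h.symm).mp hlt) (by rw [heq]; exact lt_irrefl _)
    · refine hpW i' (heq ▸ pivots_mono (Submodule.span_mono (Set.image_mono ?_)) (hpV i))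
      intro l hl
      exact lt_of_lt_of_le h hl
  have hinj : Function.Injective p := by
    intro i i' heq
    by_contra h
    rcases lt_or_gt_of_ne h with h | h
    · exact hne _ _ h heq
    · exact hne _ _ h heq.symm
  choose B hBV hB1 hBgt hBred using fun i => exists_reduced _ (p i) (hpV i)
  choose g hgS hgB using fun i => exists_coeff (hBV i)
  have hgA : ∀ i, (Matrix.of g * A) i = B i := fun i => by
    rw [mul_row]
    exact (hgB i).symm
  refine ⟨Matrix.of g, p, ?_, ?_, ?_, ?_, ?_, hmono⟩
  -- A left null vector of `g` gives a relation between the rows of `B`.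
  · rw [← Matrix.vecMul_injective_iff_isUnit]
    refine (injective_iff_map_eq_zero (Matrix.vecMulLinear (Matrix.of g))).mpr fun a ha => ?_
    rw [Matrix.vecMulLinear_apply] at ha
    by_contra hne0
    obtain ⟨i, -, hi, -⟩ := exists_pivot_sum hinj hB1 hBgt hne0
    apply hi
    have hz : Matrix.vecMul a (Matrix.of g * A) = 0 := by
      rw [← Matrix.vecMul_vecMul, ha, Matrix.zero_vecMul]
    have hz' := congrFun hz (p i)
    simp only [Matrix.vecMul, dotProduct, hgA] at hz'
    simpa using hz'
  · intro i j hij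
    exact hgS i j (not_le.mpr hij)
  · intro i
    rw [hgA, hB1]
  · intro i j hj
    rw [hgA, hBgt i j hj]
  · intro i i' hlt
    rw [hgA]
    refine hBred i' (p i) (pivots_mono (Submodule.span_mono (Set.image_mono ?_)) (hpV i))
      (hne i i' hlt)
    intro l hl
    exact le_trans (hβ i i' hlt.le) hl

end Flag

/-- For any matrix `A ∈ Mat_{n×r}(κ)` of rank `n` there exists a unique
`g ∈ P_s` such that `gA` is in row echelon form with respect to `s`. -/
theorem stmt0 {κ : Type} [Field κ] {n r d : ℕ} (hn : 0 < n) (hnr : n ≤ r)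
    (s : Fin d → ℕ) (hs : ∑ b, s b = n)
    (A : Matrix (Fin n) (Fin r) κ) (hA : A.rank = n) :
    ∃! g : Matrix (Fin n) (Fin n) κ,
      memP s g ∧ IsRowEchelon s (g * A) := by
  obtain ⟨β, hβ, hanti⟩ := exists_block s hs
  have hli : LinearIndependent κ A := by
    rw [Matrix.rank_eq_finrank_span_row] at hA
    exact linearIndependent_iff_card_eq_finrank_span.mpr ((Fintype.card_fin n).trans hA.symm)
  have hP : ∀ g : Matrix (Fin n) (Fin n) κ, memP s g ↔ IsUnit g ∧ g.BlockTriangular β := by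
    intro g
    unfold memP
    simp only [hβ]
    refine and_congr_right fun _ => ⟨fun h i j hij => h _ _ hij i j rfl rfl, ?_⟩
    rintro h _ _ hb i j rfl rfl
    exact h hb
  have hE : ∀ B : Matrix (Fin n) (Fin r) κ, IsRowEchelon s B ↔ ∃ p, EchelonWith β B p := by
    intro B
    unfold IsRowEchelon EchelonWith sameBlock
    simp only [hβ, exists_eq_left', eq_comm (a := β _) (b := β _)]
  obtain ⟨g, p, hu, hg, hp⟩ := echelon_exists hanti hli
  refine ⟨g, ⟨(hP g).mpr ⟨hu, hg⟩, (hE _).mpr ⟨p, hp⟩⟩, ?_⟩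
  rintro g' ⟨hg', he'⟩
  obtain ⟨hu', hg'⟩ := (hP g').mp hg'
  obtain ⟨p', hp'⟩ := (hE _).mp he'
  exact echelon_unique hanti hli hu' hu hg' hg hp' hp
end

section
/- Let κ be a field, r ≥ 1, and s = (s₁,…,s_d) a sequence of nonnegative integers with s₁+⋯+s_d = r. For any w ∈ S_{r,s} and any u ∈ U_w, the matrix a(w) · u is in row echelon form with respect to s. -/
/-- The permutation matrix `a(w)` with `a(w)_{ij} = δ_{i, w(j)}`. -/
def permMat (κ : Type) [Field κ] {r : ℕ} (w : Equiv.Perm (Fin r)) :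
    Matrix (Fin r) (Fin r) κ :=
  Matrix.of fun i j => if i = w j then 1 else 0

/-- `w ∈ S_{r,s}`: for `i < j` in the same block (for the partition of
`{1,…,r}` into consecutive blocks of sizes `s_d, …, s₁`), `w⁻¹(i) < w⁻¹(j)`. -/
def memSrs {d r : ℕ} (s : Fin d → ℕ) (w : Equiv.Perm (Fin r)) : Prop :=
  ∀ i j : Fin r, sameBlock s i.val j.val → i < j → w.symm i < w.symm j

/-- `u ∈ U_w`: unipotent matrices whose off-diagonal entries vanish except
possibly at positions `(i,j)` with `j < i` and `w(i) < w(j)`. -/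
def memU {κ : Type} [Field κ] {r : ℕ} (w : Equiv.Perm (Fin r))
    (u : Matrix (Fin r) (Fin r) κ) : Prop :=
  (∀ i, u i i = 1) ∧ ∀ i j, i ≠ j → ¬(j < i ∧ w i < w j) → u i j = 0

/-- Row `i` of `a(w) * u` is row `w⁻¹(i)` of `u`. -/
theorem permMat_mul_apply {κ : Type} [Field κ] {r : ℕ} (w : Equiv.Perm (Fin r))
    (u : Matrix (Fin r) (Fin r) κ) (i j : Fin r) :
    (permMat κ w * u) i j = u (w.symm i) j := by
  have h : ∀ k, (i = w k) ↔ (w.symm i = k) := fun k => (Equiv.symm_apply_eq w).symm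
  simp [permMat, Matrix.mul_apply, h]

/-- For any `w ∈ S_{r,s}` and any `u ∈ U_w`, the matrix `a(w) · u` is in row
echelon form with respect to `s`. -/
theorem stmt2 {κ : Type} [Field κ] {r d : ℕ} (hr : 0 < r)
    (s : Fin d → ℕ) (hs : ∑ b, s b = r)
    (w : Equiv.Perm (Fin r)) (hw : memSrs s w)
    (u : Matrix (Fin r) (Fin r) κ) (hu : memU w u) :
    IsRowEchelon s (permMat κ w * u) := by
  refine ⟨w.symm, ?_, ?_, ?_, ?_⟩
  · intro i
    rw [permMat_mul_apply, hu.1]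
  · intro i j hij
    rw [permMat_mul_apply]
    exact hu.2 _ _ hij.ne fun h => lt_asymm hij h.1
  · intro i i' hii
    rw [permMat_mul_apply]
    -- A nonzero entry at `(w⁻¹(i'), w⁻¹(i))` would force `i' < i`.
    refine hu.2 _ _ (fun h => hii.ne' (w.symm.injective h)) fun h => ?_
    have h2 := h.2
    simp only [Equiv.apply_symm_apply] at h2
    exact lt_asymm hii h2
  · intro i i' hb
    refine ⟨hw i i' hb, fun h => ?_⟩
    obtain ⟨b, h1, h2⟩ := hb
    rcases lt_trichotomy i i' with hlt | heq | hgt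
    · exact hlt
    · exact absurd h (by simp [heq])
    · exact absurd h (lt_asymm (hw i' i ⟨b, h2, h1⟩ hgt))
end

section
/- Let κ be a field with at least 3 elements, r ≥ 1, k ≥ 1, and let w = (w₁,…,w_k) ∈ (S_r)^k with each w_t ∈ S_{r,s^t} for some sequence s^t summing to r. Let u = (u₁,…,u_k) ∈ U_w = U_{w₁} × ⋯ × U_{w_k}, and let T act on U_w by simultaneous conjugation. Then the stabilizer C_T(u) = {t ∈ T : t u_t t⁻¹ = u_t for all t = 1,…,k} equals the subgroup Z_r of scalar matrices if and only if the graph K_{w,u} is connected. -/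
def diagM {κ : Type} [Field κ] {r : ℕ} (t : Fin r → κˣ) :
    Matrix (Fin r) (Fin r) κ :=
  Matrix.diagonal fun i => (t i : κ)

def diagInv {κ : Type} [Field κ] {r : ℕ} (t : Fin r → κˣ) :
    Matrix (Fin r) (Fin r) κ :=
  Matrix.diagonal fun i => ((t i)⁻¹ : κ)

/-- The stabilizer of `u` in the torus consists of the `t` that are constant along the edges of
`K_{w,u}`. -/
theorem conj_fixed_iff {κ : Type} [Field κ] {r k : ℕ} (w : Fin k → Equiv.Perm (Fin r))
    (u : Fin k → Matrix (Fin r) (Fin r) κ) (hu : ∀ c, memU (w c) (u c)) (t : Fin r → κˣ) :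
    (∀ c, diagM t * u c * diagInv t = u c) ↔
      ∀ i j, (SimpleGraph.fromRel fun i j =>
        ∃ c, j < i ∧ (w c) i < (w c) j ∧ u c i j ≠ 0).Adj i j → t i = t j := by
  have entry : ∀ c i j, (diagM t * u c * diagInv t) i j = (t i : κ) * u c i j * (t j : κ)⁻¹ := by
    intro c i j
    simp [diagM, diagInv, Matrix.mul_diagonal, Matrix.diagonal_mul]
  constructor
  · intro h
    have key : ∀ c i j, u c i j ≠ 0 → t i = t j := by
      intro c i j hne
      have e := congrFun (congrFun (h c) i) j
      rw [entry, mul_inv_eq_iff_eq_mul₀ (t j).ne_zero, mul_comm] at e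
      exact Units.ext (mul_left_cancel₀ hne e)
    rintro i j ⟨-, ⟨c, -, -, hne⟩ | ⟨c, -, -, hne⟩⟩
    · exact key c i j hne
    · exact (key c j i hne).symm
  · intro h c
    ext i j
    rw [entry, mul_inv_eq_iff_eq_mul₀ (t j).ne_zero, mul_comm]
    by_cases hij : i = j
    · rw [hij]
    by_cases hne : u c i j = 0
    · simp [hne]
    have hinv : j < i ∧ (w c) i < (w c) j := by
      by_contra hn
      exact hne ((hu c).2 i j hij hn)
    rw [h i j ⟨hij, Or.inl ⟨c, hinv.1, hinv.2, hne⟩⟩]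

/-- For `κ` a field with at least three elements, the stabilizer
`C_T(u) = {t ∈ T : t uₜ t⁻¹ = uₜ for all t}` equals the subgroup `Z_r` of
scalar matrices if and only if the graph `K_{w,u}` is connected. -/
theorem stmt5 {κ : Type} [Field κ] (hκ : 3 ≤ Cardinal.mk κ)
    {r k : ℕ} (hr : 1 ≤ r) (hk : 1 ≤ k)
    (w : Fin k → Equiv.Perm (Fin r))
    (hw : ∀ c, ∃ d : ℕ, ∃ s : Fin d → ℕ, (∑ b, s b) = r ∧ memSrs s (w c))
    (u : Fin k → Matrix (Fin r) (Fin r) κ) (hu : ∀ c, memU (w c) (u c)) :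
    ({t : Fin r → κˣ | ∀ c, diagM t * u c * diagInv t = u c} =
        {t : Fin r → κˣ | ∃ a : κˣ, t = fun _ => a}) ↔
      (SimpleGraph.fromRel fun i j =>
        ∃ c, j < i ∧ (w c) i < (w c) j ∧ u c i j ≠ 0).Connected := by
  have : Nonempty (Fin r) := ⟨⟨0, hr⟩⟩
  simp only [conj_fixed_iff w u hu]
  constructor
  · intro h
    refine ⟨fun a b => ?_⟩
    obtain ⟨z, hz0, hz1⟩ := Cardinal.exists_ne_ne_of_three_le hκ 0 1
    classical
    by_contra hab
    -- `z` on the component of `a`, `1` elsewhere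
    let t : Fin r → κˣ := fun i =>
      if (SimpleGraph.fromRel fun i j =>
        ∃ c, j < i ∧ (w c) i < (w c) j ∧ u c i j ≠ 0).Reachable a i then Units.mk0 z hz0 else 1
    have ht : t ∈ {t : Fin r → κˣ | ∃ a : κˣ, t = fun _ => a} := by
      rw [← h]
      intro i j hadj
      have hiff := propext (Iff.intro (fun p => SimpleGraph.Reachable.trans p hadj.reachable)
        (fun p => SimpleGraph.Reachable.trans p hadj.symm.reachable) :
          (SimpleGraph.Reachable _ a i) ↔ (SimpleGraph.Reachable _ a j))
      simp only [t, hiff]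
    obtain ⟨x, hx⟩ := ht
    have e : t a = t b := by rw [hx]
    simp only [t, SimpleGraph.Reachable.refl, hab, if_true, if_false] at e
    exact hz1 (congrArg Units.val e)
  · intro hconn
    ext t
    constructor
    · intro h
      obtain ⟨b⟩ := this
      refine ⟨t b, funext fun i => ?_⟩
      obtain ⟨p⟩ := hconn.preconnected i b
      induction p with
      | nil => rfl
      | cons hadj _ ih => exact (h _ _ hadj).trans ih
    · rintro ⟨a, rfl⟩ i j _
      rfl
end

section
/- Let q be a prime power, F_q the field with q elements, r ≥ 1, k ≥ 1, and let w = (w₁,…,w_k) ∈ (S_r)^k. Let the torus T of invertible diagonal matrices in GL_r(F_q) act on U_w = U_{w₁} × ⋯ × U_{w_k} by simultaneous conjugation t·(u₁,…,u_k) = (t u₁ t⁻¹, …, t u_k t⁻¹). Then the number of T-orbits on the set {u ∈ U_w : K_{w,u} is connected} equals R_w(q) = Σ_K (q−1)^{e(K)−r+1}, where the sum ranges over all connected spanning subgraphs K of the inversion graph K_w and e(K) is the number of edges of K. -/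
/-!
Group the matrices by their support: a tuple `u ∈ U_w` is determined by the set `S` of coloured
edges at which its entry is nonzero together with the values of those entries, an element of the
group `S → Fˣ`. Conjugation by `t` keeps `S` and multiplies the entry at `(c, i, j)` by `t i / t j`,
so it is translation by the image of `t` under a homomorphism `torusHom S : T → (S → Fˣ)`.
Hence the orbits with support `S` are the cosets of the range of `torusHom S`
(`card_orbits`). When `S` is connected the kernel consists of the constant tuples
(`card_ker_torusHom`), so the range has `(q-1)^(r-1)` elements and there are `(q-1)^(|S|-r+1)`
cosets (`card_cosets`).
-/

open scoped Classical

/-- The colored edge set of the inversion (multi)graph `K_w`: an edge of color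
`c` between `j < i` for each inversion `w_c(i) < w_c(j)`. -/
noncomputable def invEdges {r k : ℕ} (w : Fin k → Equiv.Perm (Fin r)) :
    Finset (Fin k × Fin r × Fin r) :=
  Finset.univ.filter fun e => e.2.2 < e.2.1 ∧ (w e.1) e.2.1 < (w e.1) e.2.2

/-- The graph on `Fin r` underlying a set of coloured edges. -/
def edgeGraph {r k : ℕ} (S : Finset (Fin k × Fin r × Fin r)) : SimpleGraph (Fin r) :=
  SimpleGraph.fromRel fun i j => ∃ c, (c, i, j) ∈ S

/-- The homomorphism `t ↦ (t i / t j)` indexed by the edges `(c, i, j) ∈ S`, through which the torus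
acts on the nonzero entries of a tuple with support `S`. -/
def torusHom (F : Type) [Field F] {r k : ℕ} (S : Finset (Fin k × Fin r × Fin r)) :
    (Fin r → Fˣ) →* (S → Fˣ) where
  toFun t e := t e.1.2.1 / t e.1.2.2
  map_one' := by ext; simp
  map_mul' a b := by
    funext e
    simp [mul_div_mul_comm]

/-- On a connected edge set the kernel is the group of constant tuples, a copy of `Fˣ`. -/
lemma card_ker_torusHom (F : Type) [Field F] {r k : ℕ} (hr : 1 ≤ r)
    (S : Finset (Fin k × Fin r × Fin r)) (hS : (edgeGraph S).Connected) :
    Nat.card (torusHom F S).ker = Nat.card Fˣ := by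
  have hconst (t : Fin r → Fˣ) (ht : t ∈ (torusHom F S).ker) (i j : Fin r) : t i = t j := by
    have hedge (c : Fin k) (a b : Fin r) (h : (c, a, b) ∈ S) : t a = t b := by
      have := congrFun (MonoidHom.mem_ker.1 ht) ⟨(c, a, b), h⟩
      exact div_eq_one.1 this
    obtain ⟨p⟩ := hS.preconnected i j
    induction p with
    | nil => rfl
    | cons hadj _ ih =>
      refine Eq.trans ?_ ih
      rcases hadj with ⟨-, ⟨c, h⟩ | ⟨c, h⟩⟩
      · exact hedge c _ _ h
      · exact (hedge c _ _ h).symm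
  refine Nat.card_congr
    { toFun := fun t => t.1 ⟨0, hr⟩
      invFun := fun x => ⟨fun _ => x, ?_⟩
      left_inv := ?_
      right_inv := fun x => rfl }
  · rw [MonoidHom.mem_ker]
    funext e
    simp [torusHom]
  · intro t
    exact Subtype.ext (funext fun i => hconst t.1 t.2 _ _)

lemma card_cosets (F : Type) [Field F] [Fintype F] {r k : ℕ} (hr : 1 ≤ r)
    (S : Finset (Fin k × Fin r × Fin r)) (hS : (edgeGraph S).Connected) :
    Nat.card ((S → Fˣ) ⧸ (torusHom F S).range) = (Fintype.card F - 1) ^ (S.card + 1 - r) := by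
  set m := Fintype.card F - 1 with hm
  have hcard : Nat.card Fˣ = m := by
    rw [Nat.card_eq_fintype_card, Fintype.card_units]
  have hmpos : 0 < m := hcard ▸ Nat.card_pos
  have h1 := Subgroup.card_eq_card_quotient_mul_card_subgroup (torusHom F S).range
  have h2 := Subgroup.card_eq_card_quotient_mul_card_subgroup (torusHom F S).ker
  rw [Nat.card_congr (QuotientGroup.quotientKerEquivRange (torusHom F S)).toEquiv,
    card_ker_torusHom F hr S hS, hcard, Nat.card_fun, hcard, Nat.card_fin] at h2
  rw [Nat.card_fun, hcard, Nat.card_eq_fintype_card, Fintype.card_coe] at h1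
  obtain ⟨s, rfl⟩ : ∃ s, r = s + 1 := ⟨r - 1, by omega⟩
  rw [pow_succ] at h2
  rw [← Nat.eq_of_mul_eq_mul_right hmpos h2] at h1
  rw [Nat.add_sub_add_right]
  rcases Nat.lt_or_ge 1 m with hm1 | hm1
  · -- divisibility of `m ^ |S|` by `m ^ s` gives `s ≤ |S|`, so the subtraction does not truncate
    have hle : s ≤ S.card := (Nat.pow_dvd_pow_iff_le_right hm1).1 (Dvd.intro_left _ h1.symm)
    refine Nat.eq_of_mul_eq_mul_right (pow_pos hmpos s) ?_
    rw [← h1, ← pow_add, Nat.sub_add_cancel hle]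
  · have : m = 1 := by omega
    simpa [this] using h1.symm

/-- The tuple of matrices with unit diagonal, entries `a` on `S`, and zeros elsewhere. -/
noncomputable def ofEntries {F : Type} [Field F] {r k : ℕ} (S : Finset (Fin k × Fin r × Fin r))
    (a : S → Fˣ) (c : Fin k) : Matrix (Fin r) (Fin r) F :=
  fun i j => if i = j then 1 else if h : (c, i, j) ∈ S then (a ⟨(c, i, j), h⟩ : F) else 0

lemma conj_apply {F : Type} [Field F] {r : ℕ} (t : Fin r → Fˣ) (u : Matrix (Fin r) (Fin r) F)
    (i j : Fin r) : (diagM t * u * diagInv t) i j = t i * u i j * (t j : F)⁻¹ := by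
  simp [diagM, diagInv, Matrix.mul_diagonal, Matrix.diagonal_mul]

section

variable {F : Type} [Field F] {r k : ℕ} (w : Fin k → Equiv.Perm (Fin r))

lemma ne_of_mem_invEdges {S : Finset (Fin k × Fin r × Fin r)} (hS : S ⊆ invEdges w)
    {c : Fin k} {i j : Fin r} (h : (c, i, j) ∈ S) : i ≠ j := by
  have := hS h
  simp only [invEdges, Finset.mem_filter] at this
  exact this.2.1.ne'

lemma ofEntries_of_mem {S : Finset (Fin k × Fin r × Fin r)} (hS : S ⊆ invEdges w)
    (a : S → Fˣ) {c : Fin k} {i j : Fin r} (h : (c, i, j) ∈ S) :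
    ofEntries S a c i j = a ⟨(c, i, j), h⟩ := by
  simp [ofEntries, ne_of_mem_invEdges w hS h, h]

lemma memU_ofEntries {S : Finset (Fin k × Fin r × Fin r)} (hS : S ⊆ invEdges w)
    (a : S → Fˣ) (c : Fin k) : memU (w c) (ofEntries S a c) := by
  refine ⟨fun i => by simp [ofEntries], fun i j hij hn => ?_⟩
  have : (c, i, j) ∉ S := fun h => hn (by simpa [invEdges] using hS h)
  simp [ofEntries, hij, this]

/-- The support of `ofEntries S a` is `S`. -/
lemma ofEntries_support {S : Finset (Fin k × Fin r × Fin r)} (hS : S ⊆ invEdges w)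
    (a : S → Fˣ) (c : Fin k) (i j : Fin r) :
    (j < i ∧ w c i < w c j ∧ ofEntries S a c i j ≠ 0) ↔ (c, i, j) ∈ S := by
  constructor
  · rintro ⟨h1, -, h3⟩
    by_contra h
    exact h3 (by simp [ofEntries, h1.ne', h])
  · intro h
    have h' : j < i ∧ w c i < w c j := by simpa [invEdges] using hS h
    refine ⟨h'.1, h'.2, ?_⟩
    rw [ofEntries_of_mem w hS a h]
    exact (a _).ne_zero

variable (F) in
/-- The tuples `u ∈ U_w` for which `K_{w,u}` is connected. -/
abbrev ConnTuple : Type :=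
  {u : Fin k → Matrix (Fin r) (Fin r) F //
    (∀ c, memU (w c) (u c)) ∧
    (SimpleGraph.fromRel fun i j =>
      ∃ c, j < i ∧ (w c) i < (w c) j ∧ u c i j ≠ 0).Connected}

/-- Being in the same torus orbit. -/
abbrev orbitRel (u u' : ConnTuple F w) : Prop :=
  ∃ t : Fin r → Fˣ, ∀ c, diagM t * u.val c * diagInv t = u'.val c

lemma orbitRel_equivalence : Equivalence (orbitRel (F := F) w) where
  refl u := ⟨1, fun c => by ext i j; rw [conj_apply]; simp⟩
  symm := by
    rintro u u' ⟨t, ht⟩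
    refine ⟨t⁻¹, fun c => ?_⟩
    ext i j
    rw [← ht c, conj_apply, conj_apply]
    simp only [Pi.inv_apply, Units.val_inv_eq_inv_val, inv_inv]
    field_simp [(t i).ne_zero, (t j).ne_zero]
  trans := by
    rintro u u' u'' ⟨t, ht⟩ ⟨s, hs⟩
    refine ⟨s * t, fun c => ?_⟩
    ext i j
    rw [← hs c, ← ht c, conj_apply, conj_apply, conj_apply]
    simp only [Pi.mul_apply, Units.val_mul, mul_inv]
    ring

/-- The connected spanning subgraphs of `K_w`. -/
abbrev ConnSub : Type :=
  {S : Finset (Fin k × Fin r × Fin r) // S ⊆ invEdges w ∧ (edgeGraph S).Connected}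

/-- `ofEntries` as a map into the tuples with connected graph. -/
noncomputable def toTuple (S : ConnSub w) (a : S.1 → Fˣ) : ConnTuple F w :=
  ⟨ofEntries S.1 a, memU_ofEntries w S.2.1 a, by
    simpa only [ofEntries_support w S.2.1 a, edgeGraph] using S.2.2⟩

lemma toTuple_surj (u : ConnTuple F w) : ∃ S a, toTuple w S a = u := by
  obtain ⟨u, hu, hc⟩ := u
  let S : Finset (Fin k × Fin r × Fin r) := (invEdges w).filter fun e => u e.1 e.2.1 e.2.2 ≠ 0
  have hmem (c : Fin k) (i j : Fin r) :
      (c, i, j) ∈ S ↔ j < i ∧ w c i < w c j ∧ u c i j ≠ 0 := by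
    simp [S, invEdges, and_assoc]
  refine ⟨⟨S, Finset.filter_subset _ _, ?_⟩,
    fun e => Units.mk0 (u e.1.1 e.1.2.1 e.1.2.2) (Finset.mem_filter.1 e.2).2, ?_⟩
  · simpa only [edgeGraph, hmem] using hc
  · refine Subtype.ext (funext fun c => ?_)
    ext i j
    by_cases hij : i = j
    · subst hij
      simp [toTuple, ofEntries, (hu c).1]
    by_cases h : (c, i, j) ∈ S
    · simp [toTuple, ofEntries, hij, h]
    · simp only [toTuple, ofEntries, hij, h, if_false, dite_false]
      by_contra hne
      refine h ((hmem c i j).2 ?_)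
      by_contra hn
      exact hne ((hu c).2 i j hij fun h' => hn ⟨h'.1, h'.2, Ne.symm hne⟩).symm

/-- Related tuples have the same support, since conjugation multiplies entries by units. -/
lemma support_eq_of_rel {S S' : ConnSub w} {a : S.1 → Fˣ} {b : S'.1 → Fˣ}
    (h : orbitRel w (toTuple w S a) (toTuple w S' b)) : S = S' := by
  obtain ⟨t, ht⟩ := h
  refine Subtype.ext (Finset.ext fun ⟨c, i, j⟩ => ?_)
  have hij : (ofEntries S'.1 b c) i j = t i * ofEntries S.1 a c i j * (t j : F)⁻¹ := by
    rw [← conj_apply]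
    exact (congrFun (congrFun (ht c) i) j).symm
  rw [← ofEntries_support w S.2.1 a, ← ofEntries_support w S'.2.1 b, hij]
  simp

/-- For a fixed support, orbits are cosets of the range of `torusHom`. -/
lemma rel_iff (S : ConnSub w) (a b : S.1 → Fˣ) :
    orbitRel w (toTuple w S a) (toTuple w S b) ↔ a⁻¹ * b ∈ (torusHom F S.1).range := by
  refine exists_congr fun t => ⟨fun ht => ?_, fun ht c => ?_⟩
  · funext ⟨⟨c, i, j⟩, h⟩
    have := congrFun (congrFun (ht c) i) j
    rw [conj_apply] at this
    simp only [toTuple, ofEntries_of_mem w S.2.1 _ h] at this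
    ext
    simp only [torusHom, MonoidHom.coe_mk, OneHom.coe_mk, Pi.mul_apply, Pi.inv_apply,
      Units.val_mul, Units.val_div_eq_div_val, Units.val_inv_eq_inv_val, ← this]
    have := (a ⟨(c, i, j), h⟩).ne_zero
    field_simp
  · ext i j
    rw [conj_apply]
    by_cases hij : i = j
    · subst hij
      simp [toTuple, ofEntries]
    by_cases h : (c, i, j) ∈ S.1
    · have := congrArg Units.val (congrFun ht ⟨(c, i, j), h⟩)
      simp only [torusHom, MonoidHom.coe_mk, OneHom.coe_mk, Pi.mul_apply, Pi.inv_apply,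
        Units.val_mul, Units.val_div_eq_div_val, Units.val_inv_eq_inv_val] at this
      simp only [toTuple, ofEntries_of_mem w S.2.1 _ h]
      have ha := (a ⟨(c, i, j), h⟩).ne_zero
      rw [eq_inv_mul_iff_mul_eq₀ ha] at this
      rw [← this]
      ring
    · simp [toTuple, ofEntries, hij, h]

lemma card_orbits [Fintype F] :
    Nat.card (Quot (orbitRel (F := F) w)) =
      ∑ S : ConnSub w, Nat.card ((S.1 → Fˣ) ⧸ (torusHom F S.1).range) := by
  rw [← Nat.card_sigma]
  have hexact {u u' : ConnTuple F w} (h : Quot.mk (orbitRel w) u = Quot.mk (orbitRel w) u') :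
      orbitRel w u u' :=
    (orbitRel_equivalence w).eqvGen_iff.1 (Quot.eqvGen_exact h)
  let g : (Σ S : ConnSub w, (S.1 → Fˣ) ⧸ (torusHom F S.1).range) → Quot (orbitRel (F := F) w) :=
    fun p => Quotient.liftOn' p.2 (fun a => Quot.mk _ (toTuple w p.1 a)) fun a b hab =>
      Quot.sound ((rel_iff w p.1 a b).2 (QuotientGroup.leftRel_apply.1 hab))
  refine (Nat.card_congr (Equiv.ofBijective g ⟨?_, ?_⟩)).symm
  · rintro ⟨S, x⟩ ⟨S', y⟩ h
    induction x using QuotientGroup.induction_on with | H a => ?_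
    induction y using QuotientGroup.induction_on with | H b => ?_
    have hrel : orbitRel w (toTuple w S a) (toTuple w S' b) := hexact h
    obtain rfl := support_eq_of_rel w hrel
    rw [QuotientGroup.eq.2 ((rel_iff w S a b).1 hrel)]
  · rintro ⟨u⟩
    obtain ⟨S, a, rfl⟩ := toTuple_surj w u
    exact ⟨⟨S, QuotientGroup.mk a⟩, rfl⟩

end

/-- The number of `T(F_q)`-orbits on `{u ∈ U_w : K_{w,u} connected}` equals
`R_w(q) = Σ_K (q−1)^{e(K)−r+1}`, summed over connected spanning subgraphs `K`
of the inversion graph `K_w`. -/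
theorem stmt6 (q : ℕ) (F : Type) [Field F] [Fintype F]
    (hF : Fintype.card F = q)
    {r k : ℕ} (hr : 1 ≤ r) (hk : 1 ≤ k)
    (w : Fin k → Equiv.Perm (Fin r)) :
    Nat.card (Quot (fun (u u' :
        {u : Fin k → Matrix (Fin r) (Fin r) F //
          (∀ c, memU (w c) (u c)) ∧
          (SimpleGraph.fromRel fun i j =>
            ∃ c, j < i ∧ (w c) i < (w c) j ∧ u c i j ≠ 0).Connected}) =>
      ∃ t : Fin r → Fˣ, ∀ c, diagM t * u.val c * diagInv t = u'.val c)) =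
    ∑ S ∈ (invEdges w).powerset,
      if (SimpleGraph.fromRel fun i j => ∃ c, (c, i, j) ∈ S).Connected then
        (q - 1) ^ (S.card + 1 - r)
      else 0 := by
  subst hF
  rw [← Finset.sum_filter]
  refine (card_orbits w).trans ?_
  rw [Finset.sum_congr rfl fun S _ => card_cosets F hr S.1 S.2.2]
  refine (Finset.sum_subtype _ (fun S => ?_)
    (fun S : Finset (Fin k × Fin r × Fin r) => (Fintype.card F - 1) ^ (S.card + 1 - r))).symm
  rw [Finset.mem_filter, Finset.mem_powerset]
  rfl
end

section
/- Let r, k ≥ 1 and s₁,…,s_k ≥ 0, let Γ be the complete bipartite supernova graph with these parameters, and let v ∈ ℤ_{≥0}^I be nonzero. Then v ∈ M_Γ if and only if the following three conditions hold: (i) for all i = 1,…,k, −2v_{(i;0)} + v_{(i;1)} + Σ_{l=1}^r v_{(l)} ≥ 0 (where v_{(i;1)} is read as 0 if s_i = 0); (ii) for all l = 1,…,r, Σ_{i=1}^k v_{(i;0)} ≥ 2 v_{(l)}; (iii) for all i = 1,…,k and all j = 0,…,s_i − 1, v_{(i;j)} − v_{(i;j+1)} ≥ v_{(i;j+1)}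 − v_{(i;j+2)}, with the convention v_{(i;s_i+1)} = 0. -/
/-!
The pairings `(e_a, v)` are computed vertex by vertex (`sum_inl`, `sum_leg_zero`, `sum_leg_succ`);
the inequalities `(e_a, v) ≤ 0` at `(i;0)`, `(l)` and `(i;j+1)` are then literally the three
conditions. It remains to see that these conditions force the support of a nonzero `v ≥ 0` to be
connected. The third one says that `v` is convex along each leg and, since the leg ends at `0`, that
`v` is nonincreasing along it (`leg_antitone`). Hence a leg meeting the support has
`v_{(i;0)} > 0`, and its part of the support is an initial segment; the first condition with
`v_{(i;1)} ≤ v_{(i;0)}` then gives some `v_{(l)} > 0`, while the second gives some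
`v_{(i;0)} > 0` as soon as some `v_{(l)} > 0`. So both sides of the complete bipartite core meet
the support, and everything in the support is joined to the core (`support_connected`).
-/

/-- The vertex set of the complete bipartite supernova graph:
central vertices `(1), …, (r)` and leg vertices `(i;j)` for `1 ≤ i ≤ k`,
`0 ≤ j ≤ sᵢ`. -/
abbrev SNVertex (r k : ℕ) (s : Fin k → ℕ) : Type :=
  (Fin r) ⊕ (Σ i : Fin k, Fin (s i + 1))

/-- The number of edges between two vertices of the supernova graph: one edge
between each `(l)` and each `(i;0)`, and one edge between `(i;j)` and
`(i;j+1)` for `0 ≤ j ≤ sᵢ − 1`. -/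
def snEdges {r k : ℕ} {s : Fin k → ℕ} : SNVertex r k s → SNVertex r k s → ℕ
  | Sum.inl _, Sum.inr ⟨_, j⟩ => if j.val = 0 then 1 else 0
  | Sum.inr ⟨_, j⟩, Sum.inl _ => if j.val = 0 then 1 else 0
  | Sum.inr ⟨i, j⟩, Sum.inr ⟨i', j'⟩ =>
      if i.val = i'.val ∧ (j.val + 1 = j'.val ∨ j'.val + 1 = j.val) then 1 else 0
  | _, _ => 0

/-- The supernova graph as a simple graph. -/
def snGraph (r k : ℕ) (s : Fin k → ℕ) : SimpleGraph (SNVertex r k s) :=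
  SimpleGraph.fromRel fun a b => snEdges a b ≠ 0

/-- `v ∈ M_Γ`: `v` is a nonzero, nonnegative vector with connected support
satisfying `(e_a, v) ≤ 0`, i.e. `2 v_a − Σ_b n_{ab} v_b ≤ 0`, for all
vertices `a`. -/
def memM (r k : ℕ) (s : Fin k → ℕ) (v : SNVertex r k s → ℤ) : Prop :=
  v ≠ 0 ∧ (∀ a, 0 ≤ v a) ∧
  ((snGraph r k s).induce {a | v a ≠ 0}).Connected ∧
  ∀ a, 2 * v a - ∑ b, (snEdges a b : ℤ) * v b ≤ 0

/-- The value `v_{(i;j)}`, extended by `0` beyond the end of the leg. -/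
def legVal {r k : ℕ} {s : Fin k → ℕ} (v : SNVertex r k s → ℤ) (i : Fin k) (j : ℕ) : ℤ :=
  if h : j < s i + 1 then v (Sum.inr ⟨i, ⟨j, h⟩⟩) else 0

lemma legVal_of_lt {r k : ℕ} {s : Fin k → ℕ} (v : SNVertex r k s → ℤ) (i : Fin k) (j : ℕ)
    (h : j < s i + 1) : legVal v i j = v (Sum.inr ⟨i, ⟨j, h⟩⟩) := dif_pos h

lemma sum_fin_indicator (n m : ℕ) (f : Fin n → ℤ) :
    ∑ j : Fin n, (if m = j.val then f j else 0) = if h : m < n then f ⟨m, h⟩ else 0 := by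
  split_ifs with h
  · rw [Finset.sum_eq_single (⟨m, h⟩ : Fin n)]
    · simp
    · intro b _ hb
      rw [if_neg]
      rintro rfl
      exact hb rfl
    · simp
  · apply Finset.sum_eq_zero
    intro b _
    rw [if_neg]
    have := b.isLt
    omega

lemma sum_inl {r k : ℕ} {s : Fin k → ℕ} (v : SNVertex r k s → ℤ) (l : Fin r) :
    ∑ b, (snEdges (Sum.inl l : SNVertex r k s) b : ℤ) * v b =
      ∑ i : Fin k, v (Sum.inr ⟨i, ⟨0, Nat.succ_pos _⟩⟩) := by
  rw [Fintype.sum_sum_type, Fintype.sum_sigma]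
  simp only [snEdges, Nat.cast_zero, zero_mul, Finset.sum_const_zero, zero_add]
  refine Finset.sum_congr rfl fun i _ => ?_
  have := sum_fin_indicator (s i + 1) 0 (fun j => v (Sum.inr ⟨i, j⟩))
  rw [dif_pos (Nat.succ_pos _)] at this
  rw [← this]
  refine Finset.sum_congr rfl fun j _ => ?_
  by_cases h : j.val = 0
  · rw [if_pos h, if_pos h.symm]; simp
  · rw [if_neg h, if_neg (Ne.symm h)]; simp

/-- The contribution of the leg `i` itself to the neighbour sum at `(i;j)`. -/
lemma sum_leg {r k : ℕ} {s : Fin k → ℕ} (v : SNVertex r k s → ℤ) (i : Fin k)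
    (j : Fin (s i + 1)) :
    ∑ x : (Σ i : Fin k, Fin (s i + 1)),
        (snEdges (Sum.inr ⟨i, j⟩ : SNVertex r k s) (Sum.inr x) : ℤ) * v (Sum.inr x) =
      legVal v i (j.val + 1) + if 0 < j.val then legVal v i (j.val - 1) else 0 := by
  rw [Fintype.sum_sigma, Finset.sum_eq_single i]
  · have h1 := sum_fin_indicator (s i + 1) (j.val + 1) (fun j => v (Sum.inr ⟨i, j⟩))
    have h2 := sum_fin_indicator (s i + 1) (j.val - 1) (fun j => v (Sum.inr ⟨i, j⟩))
    unfold legVal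
    rw [← h1, ← h2]
    split_ifs with hj
    · rw [← Finset.sum_add_distrib]
      refine Finset.sum_congr rfl fun b _ => ?_
      simp only [snEdges, true_and]
      split_ifs <;> omega
    · rw [add_zero]
      refine Finset.sum_congr rfl fun b _ => ?_
      simp only [snEdges, true_and]
      split_ifs <;> omega
  · intro b _ hb
    apply Finset.sum_eq_zero
    intro x _
    simp only [snEdges]
    rw [if_neg]
    · simp
    · rintro ⟨h, -⟩
      exact hb (Fin.ext h.symm)
  · simp

lemma sum_leg_zero {r k : ℕ} {s : Fin k → ℕ} (v : SNVertex r k s → ℤ) (i : Fin k) :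
    ∑ b, (snEdges (Sum.inr ⟨i, ⟨0, Nat.succ_pos _⟩⟩ : SNVertex r k s) b : ℤ) * v b =
      ∑ l : Fin r, v (Sum.inl l) + legVal v i 1 := by
  rw [Fintype.sum_sum_type, sum_leg]
  simp [snEdges]

lemma sum_leg_succ {r k : ℕ} {s : Fin k → ℕ} (v : SNVertex r k s → ℤ) (i : Fin k) (j : ℕ)
    (hj : j + 1 < s i + 1) :
    ∑ b, (snEdges (Sum.inr ⟨i, ⟨j + 1, hj⟩⟩ : SNVertex r k s) b : ℤ) * v b =
      legVal v i (j + 2) + legVal v i j := by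
  rw [Fintype.sum_sum_type, sum_leg]
  simp [snEdges]

/-- Convexity along a leg that ends at `0` makes `v` nonincreasing along it: the last difference is
`v_{(i;s_i)} ≥ 0`, and the differences grow towards the root. -/
lemma leg_antitone {r k : ℕ} {s : Fin k → ℕ} (v : SNVertex r k s → ℤ) (hvnn : ∀ a, 0 ≤ v a)
    (i : Fin k)
    (h3 : ∀ j < s i, legVal v i (j + 1) - legVal v i (j + 2) ≤ legVal v i j - legVal v i (j + 1))
    (j : ℕ) (hj : j ≤ s i) : legVal v i (j + 1) ≤ legVal v i j := by
  induction hj using Nat.decreasingInduction with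
  | self =>
    rw [legVal_of_lt v i (s i) (Nat.lt_succ_self _), legVal, dif_neg (lt_irrefl _)]
    exact hvnn _
  | of_succ j hj ih =>
    have := h3 j hj
    have ih' : legVal v i (j + 2) ≤ legVal v i (j + 1) := ih
    linarith

lemma support_connected {r k : ℕ} {s : Fin k → ℕ} (v : SNVertex r k s → ℤ) (hv0 : v ≠ 0)
    (hvnn : ∀ a, 0 ≤ v a)
    (h1 : ∀ i, 2 * legVal v i 0 ≤ ∑ l : Fin r, v (Sum.inl l) + legVal v i 1)
    (h2 : ∀ l : Fin r, 2 * v (Sum.inl l) ≤ ∑ i : Fin k, legVal v i 0)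
    (h3 : ∀ i, ∀ j < s i,
      legVal v i (j + 1) - legVal v i (j + 2) ≤ legVal v i j - legVal v i (j + 1)) :
    ((snGraph r k s).induce {a | v a ≠ 0}).Connected := by
  have anti : ∀ i j, j ≤ s i → legVal v i (j + 1) ≤ legVal v i j :=
    fun i => leg_antitone v hvnn i (h3 i)
  have le0 : ∀ i j, j ≤ s i → legVal v i j ≤ legVal v i 0 := by
    intro i j
    induction j with
    | zero => intro _; exact le_rfl
    | succ j ih => intro hj; exact (anti i j (by omega)).trans (ih (by omega))
  have root_of_center : ∀ l, v (Sum.inl l) ≠ 0 → ∃ i, legVal v i 0 ≠ 0 := by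
    intro l hl
    by_contra! hc
    have := h2 l
    rw [Finset.sum_eq_zero fun i _ => hc i] at this
    exact hl (le_antisymm (by linarith) (hvnn _))
  have center_of_root : ∀ i, 0 < legVal v i 0 → ∃ l, v (Sum.inl l) ≠ 0 := by
    intro i hi
    by_contra! hc
    have := h1 i
    rw [Finset.sum_eq_zero fun l _ => hc l] at this
    have := anti i 0 (Nat.zero_le _)
    simp only [zero_add] at *
    linarith
  obtain ⟨l₀, hl₀⟩ : ∃ l, v (Sum.inl l) ≠ 0 := by
    obtain ⟨a, ha⟩ := Function.ne_iff.mp hv0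
    rcases a with l | ⟨i, j, hj⟩
    · exact ⟨l, ha⟩
    · apply center_of_root i
      have hle := le0 i j (by omega)
      rw [legVal_of_lt v i j hj] at hle
      exact lt_of_lt_of_le (lt_of_le_of_ne (hvnn _) (Ne.symm ha)) hle
  obtain ⟨i₀, hi₀⟩ := root_of_center l₀ hl₀
  rw [legVal_of_lt v i₀ 0 (Nat.succ_pos _)] at hi₀
  have adj_core : ∀ (l : Fin r) (i : Fin k),
      (snGraph r k s).Adj (Sum.inl l) (Sum.inr ⟨i, ⟨0, Nat.succ_pos _⟩⟩) := by
    intro l i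
    simp [snGraph, snEdges]
  have adj_leg : ∀ (i : Fin k) (j : ℕ) (hj : j + 1 < s i + 1),
      (snGraph r k s).Adj (Sum.inr ⟨i, ⟨j, by omega⟩⟩) (Sum.inr ⟨i, ⟨j + 1, hj⟩⟩) := by
    intro i j hj
    simp [snGraph, snEdges]
  rw [SimpleGraph.connected_iff_exists_forall_reachable]
  refine ⟨⟨Sum.inl l₀, hl₀⟩, ?_⟩
  rintro ⟨l | ⟨i, j, hj⟩, ha⟩
  · have e1 : ((snGraph r k s).induce {a | v a ≠ 0}).Adj ⟨Sum.inl l₀, hl₀⟩ ⟨_, hi₀⟩ :=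
      adj_core l₀ i₀
    have e2 : ((snGraph r k s).induce {a | v a ≠ 0}).Adj ⟨Sum.inl l, ha⟩ ⟨_, hi₀⟩ :=
      adj_core l i₀
    exact e1.reachable.trans e2.symm.reachable
  · induction j with
    | zero =>
      have e : ((snGraph r k s).induce {a | v a ≠ 0}).Adj ⟨Sum.inl l₀, hl₀⟩ ⟨_, ha⟩ :=
        adj_core l₀ i
      exact e.reachable
    | succ j ih =>
      have hb : v (Sum.inr ⟨i, ⟨j, by omega⟩⟩) ≠ 0 := by
        have hle := anti i j (by omega)
        rw [legVal_of_lt v i j (by omega), legVal_of_lt v i (j + 1) hj] at hle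
        exact (lt_of_lt_of_le (lt_of_le_of_ne (hvnn _) (Ne.symm ha)) hle).ne'
      have e : ((snGraph r k s).induce {a | v a ≠ 0}).Adj ⟨_, hb⟩ ⟨_, ha⟩ := adj_leg i j hj
      exact (ih (by omega) hb).trans e.reachable

/-- Characterization of the fundamental domain `M_Γ` for the complete
bipartite supernova graph (Lemma 2.5 of the paper). -/
theorem stmt8 {r k : ℕ} (hr : 1 ≤ r) (hk : 1 ≤ k) (s : Fin k → ℕ)
    (v : SNVertex r k s → ℤ) (hv0 : v ≠ 0) (hvnn : ∀ a, 0 ≤ v a) :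
    memM r k s v ↔
      ((∀ i : Fin k,
          0 ≤ -2 * v (Sum.inr ⟨i, ⟨0, Nat.succ_pos _⟩⟩) +
            (if h : 0 < s i then v (Sum.inr ⟨i, ⟨1, by omega⟩⟩) else 0) +
            ∑ l : Fin r, v (Sum.inl l)) ∧
        (∀ l : Fin r,
          2 * v (Sum.inl l) ≤ ∑ i : Fin k, v (Sum.inr ⟨i, ⟨0, Nat.succ_pos _⟩⟩)) ∧
        (∀ i : Fin k, ∀ j : ℕ, (hj : j < s i) →
          v (Sum.inr ⟨i, ⟨j + 1, by omega⟩⟩) -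
              (if h : j + 2 ≤ s i then v (Sum.inr ⟨i, ⟨j + 2, by omega⟩⟩) else 0) ≤
            v (Sum.inr ⟨i, ⟨j, by omega⟩⟩) - v (Sum.inr ⟨i, ⟨j + 1, by omega⟩⟩))) := by
  have hroot : ∀ i, v (Sum.inr ⟨i, ⟨0, Nat.succ_pos _⟩⟩) = legVal v i 0 :=
    fun i => (legVal_of_lt v i 0 (Nat.succ_pos _)).symm
  have hone : ∀ i : Fin k,
      (if h : 0 < s i then v (Sum.inr ⟨i, ⟨1, by omega⟩⟩) else 0) = legVal v i 1 := by
    intro i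
    unfold legVal
    split_ifs <;> first | rfl | omega
  have htwo : ∀ (i : Fin k) (j : ℕ),
      (if h : j + 2 ≤ s i then v (Sum.inr ⟨i, ⟨j + 2, by omega⟩⟩) else 0) =
        legVal v i (j + 2) := by
    intro i j
    unfold legVal
    split_ifs <;> first | rfl | omega
  simp only [hone, htwo, hroot]
  constructor
  · rintro ⟨-, -, -, h⟩
    refine ⟨fun i => ?_, fun l => ?_, fun i j hj => ?_⟩
    · have := h (Sum.inr ⟨i, ⟨0, Nat.succ_pos _⟩⟩)
      rw [sum_leg_zero, hroot] at this
      linarith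
    · have := h (Sum.inl l)
      rw [sum_inl] at this
      simp only [hroot] at this
      linarith
    · have := h (Sum.inr ⟨i, ⟨j + 1, by omega⟩⟩)
      rw [sum_leg_succ, legVal_of_lt v i j (by omega)] at this
      linarith
  · rintro ⟨h1, h2, h3⟩
    refine ⟨hv0, hvnn, support_connected v hv0 hvnn (fun i => ?_) h2 (fun i j hj => ?_), ?_⟩
    · linarith [h1 i]
    · rw [legVal_of_lt v i j (by omega), legVal_of_lt v i (j + 1) (by omega)]
      exact h3 i j hj
    · rintro (l | ⟨i, _ | j, hj⟩)
      · rw [sum_inl]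
        simp only [hroot]
        linarith [h2 l]
      · rw [sum_leg_zero, hroot]
        linarith [h1 i]
      · rw [sum_leg_succ, legVal_of_lt v i j (by omega)]
        linarith [h3 i j (by omega)]
end

section
/- Let r, k ≥ 1 and s₁,…,s_k ≥ 0, let Γ be the complete bipartite supernova graph with these parameters, and let μ = (μ¹,…,μ^k) be a k-tuple of nonzero partitions, μ^i having parts μ^i_1 ≥ ⋯ ≥ μ^i_{s_i+1} ≥ 0. Assume k > 1 or |μ¹| > 1. Then the dimension vector v_μ lies in M_Γ if and only if r ≥ |μ^i| + μ^i_1 for all i = 1,…,k. -/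
/-- The dimension vector `v_μ` attached to a `k`-tuple of partitions `μ`
(where `μ i f` is the part `μ^i_{f+1}`): `v_{(l)} = 1`,
`v_{(i;j)} = |μ^i| − (μ^i_1 + ⋯ + μ^i_j) = Σ_{f ≥ j} μ i f`. -/
def dimVec {r k : ℕ} {s : Fin k → ℕ} (μ : ∀ i : Fin k, Fin (s i + 1) → ℕ) :
    SNVertex r k s → ℤ
  | Sum.inl _ => 1
  | Sum.inr ⟨i, j⟩ =>
      ∑ f ∈ Finset.univ.filter (fun f : Fin (s i + 1) => j.val ≤ f.val), (μ i f : ℤ)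

/-- The tail `∑_{f ≥ j} μ f` of a finite sequence of parts, with `j` any natural number, so that
the tail vanishes past the last index. -/
def snTail {n : ℕ} (μ : Fin n → ℕ) (j : ℕ) : ℤ :=
  ∑ f ∈ Finset.univ.filter (fun f : Fin n => j ≤ f.val), (μ f : ℤ)

lemma snTail_zero {n : ℕ} (μ : Fin n → ℕ) : snTail μ 0 = ((∑ f, μ f : ℕ) : ℤ) := by
  simp [snTail]

lemma snTail_of_le {n : ℕ} (μ : Fin n → ℕ) {j : ℕ} (h : n ≤ j) : snTail μ j = 0 := by
  unfold snTail
  apply Finset.sum_eq_zero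
  intro f hf
  have := (Finset.mem_filter.mp hf).2
  have := f.isLt
  omega

lemma snTail_nonneg {n : ℕ} (μ : Fin n → ℕ) (j : ℕ) : 0 ≤ snTail μ j :=
  Finset.sum_nonneg fun _ _ => by positivity

lemma snTail_succ {n : ℕ} (μ : Fin n → ℕ) (j : Fin n) :
    snTail μ j.val = μ j + snTail μ (j.val + 1) := by
  unfold snTail
  have : Finset.univ.filter (fun f : Fin n => j.val ≤ f.val)
      = insert j (Finset.univ.filter (fun f : Fin n => j.val + 1 ≤ f.val)) := by
    ext f
    simp only [Finset.mem_filter, Finset.mem_univ, true_and, Finset.mem_insert, Fin.ext_iff]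
    omega
  rw [this, Finset.sum_insert (by simp)]

lemma sum_fin_ite {n : ℕ} (g : ℕ → ℤ) (m : ℕ) (hg : n ≤ m → g m = 0) :
    ∑ j : Fin n, (if j.val = m then g j.val else 0) = g m := by
  by_cases h : m < n
  · rw [Finset.sum_eq_single ⟨m, h⟩]
    · simp
    · intro b _ hb
      rw [if_neg]
      intro h'
      exact hb (Fin.ext h')
    · simp
  · rw [hg (by omega)]
    apply Finset.sum_eq_zero
    intro j _
    rw [if_neg]
    have := j.isLt
    omega

lemma dimVec_inr {r k : ℕ} {s : Fin k → ℕ} (μ : ∀ i : Fin k, Fin (s i + 1) → ℕ)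
    (i : Fin k) (j : Fin (s i + 1)) :
    dimVec (r := r) μ (Sum.inr ⟨i, j⟩) = snTail (μ i) j.val := rfl

lemma sum_edges_inl {r k : ℕ} {s : Fin k → ℕ} (μ : ∀ i : Fin k, Fin (s i + 1) → ℕ)
    (l : Fin r) :
    ∑ b, (snEdges (Sum.inl l : SNVertex r k s) b : ℤ) * dimVec μ b
      = ∑ i, ((∑ f, μ i f : ℕ) : ℤ) := by
  rw [Fintype.sum_sum_type, Fintype.sum_sigma]
  have h1 : ∀ x : Fin r, snEdges (Sum.inl l : SNVertex r k s) (Sum.inl x) = 0 := fun _ => rfl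
  simp only [h1, Nat.cast_zero, zero_mul, Finset.sum_const_zero, zero_add]
  refine Finset.sum_congr rfl fun i _ => ?_
  rw [← snTail_zero, ← sum_fin_ite (n := s i + 1) (snTail (μ i)) 0 (by omega)]
  refine Finset.sum_congr rfl fun j _ => ?_
  rw [dimVec_inr]
  simp [snEdges]

/-- The neighbours of `(i;j)` contribute `T (j+1)` from the outer side, also at the end of the leg
where this tail is zero, and `r` (for `j = 0`) or `T (j-1)` (for `j ≥ 1`) from the inner side. -/
lemma sum_edges_inr {r k : ℕ} {s : Fin k → ℕ} (μ : ∀ i : Fin k, Fin (s i + 1) → ℕ)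
    (i : Fin k) (j : Fin (s i + 1)) :
    ∑ b, (snEdges (Sum.inr ⟨i, j⟩ : SNVertex r k s) b : ℤ) * dimVec μ b
      = snTail (μ i) (j.val + 1) +
        (if j.val = 0 then (r : ℤ) else snTail (μ i) (j.val - 1)) := by
  rw [Fintype.sum_sum_type, Fintype.sum_sigma, Finset.sum_eq_single (s := Finset.univ) i]
  · have h2 : ∑ j' : Fin (s i + 1), (snEdges (Sum.inr ⟨i, j⟩ : SNVertex r k s)
          (Sum.inr ⟨i, j'⟩) : ℤ) * dimVec (r := r) μ (Sum.inr ⟨i, j'⟩)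
        = ∑ j' : Fin (s i + 1), (if j'.val = j.val + 1 then snTail (μ i) j'.val else 0)
          + ∑ j' : Fin (s i + 1), (if j'.val + 1 = j.val then snTail (μ i) j'.val else 0) := by
      rw [← Finset.sum_add_distrib]
      refine Finset.sum_congr rfl fun j' _ => ?_
      rw [dimVec_inr]
      simp only [snEdges, true_and]
      split_ifs <;> omega
    rw [h2, sum_fin_ite _ _ (fun h => snTail_of_le _ h)]
    by_cases hj : j.val = 0
    · simp [snEdges, dimVec, hj]
      ring
    · have h3 : ∀ j' : Fin (s i + 1), (j'.val + 1 = j.val) = (j'.val = j.val - 1) := by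
        intro j'
        apply propext
        omega
      simp only [h3]
      rw [sum_fin_ite _ _ (fun h => snTail_of_le _ h)]
      simp [snEdges, hj]
  · intro i' _ hi
    apply Finset.sum_eq_zero
    intro j' _
    have : ¬ i.val = i'.val := fun h => hi (Fin.ext h.symm)
    simp [snEdges, this]
  · simp

lemma dimVec_connected {r k : ℕ} (hr : 1 ≤ r) (hk : 1 ≤ k) (s : Fin k → ℕ)
    (μ : ∀ i : Fin k, Fin (s i + 1) → ℕ) (hnz : ∀ i, 0 < ∑ f, μ i f) :
    ((snGraph r k s).induce {a | dimVec μ a ≠ 0}).Connected := by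
  set G := (snGraph r k s).induce {a | dimVec μ a ≠ 0} with hG
  have hc : ∀ l : Fin r, dimVec μ (Sum.inl l : SNVertex r k s) ≠ 0 := fun l => one_ne_zero
  have hl : ∀ i : Fin k, dimVec μ (Sum.inr ⟨i, 0⟩ : SNVertex r k s) ≠ 0 := by
    intro i
    rw [dimVec_inr, Fin.val_zero, snTail_zero]
    exact_mod_cast (hnz i).ne'
  have hadj : ∀ (l : Fin r) (i : Fin k), G.Adj ⟨Sum.inl l, hc l⟩ ⟨Sum.inr ⟨i, 0⟩, hl i⟩ := by
    intro l i
    simp [hG, snGraph, SimpleGraph.fromRel_adj, snEdges]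
  let c : {a : SNVertex r k s | dimVec μ a ≠ 0} := ⟨Sum.inl ⟨0, hr⟩, hc _⟩
  have hleg : ∀ (i : Fin k) (m : ℕ) (hm : m < s i + 1)
      (h : dimVec μ (Sum.inr ⟨i, ⟨m, hm⟩⟩ : SNVertex r k s) ≠ 0),
      G.Reachable c ⟨Sum.inr ⟨i, ⟨m, hm⟩⟩, h⟩ := by
    intro i m
    induction m with
    | zero => exact fun _ _ => (hadj _ i).reachable
    | succ m ih =>
      intro hm h
      have h' : dimVec μ (Sum.inr ⟨i, ⟨m, by omega⟩⟩ : SNVertex r k s) ≠ 0 := by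
        rw [dimVec_inr] at h ⊢
        have h1 := snTail_succ (μ i) ⟨m, by omega⟩
        have h2 := snTail_nonneg (μ i) (m + 1)
        simp only at h h1 ⊢
        omega
      refine (ih _ h').trans (SimpleGraph.Adj.reachable ?_)
      simp [hG, snGraph, SimpleGraph.fromRel_adj, snEdges]
  have hall : ∀ a, G.Reachable c a := by
    rintro ⟨l | ⟨i, ⟨m, hm⟩⟩, h⟩
    · exact (hadj _ ⟨0, hk⟩).reachable.trans (hadj l ⟨0, hk⟩).symm.reachable
    · exact hleg i m hm h
  have : Nonempty {a : SNVertex r k s | dimVec μ a ≠ 0} := ⟨c⟩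
  exact ⟨fun a b => (hall a).symm.trans (hall b)⟩

lemma two_le_total {k : ℕ} (hk : 1 ≤ k) (m : Fin k → ℕ) (hnz : ∀ i, 0 < m i)
    (hcond : 1 < k ∨ 1 < m ⟨0, hk⟩) : 2 ≤ ∑ i, m i := by
  rcases hcond with h | h
  · calc 2 ≤ ∑ _i : Fin k, 1 := by simpa using Nat.succ_le_of_lt h
      _ ≤ ∑ i, m i := Finset.sum_le_sum fun i _ => hnz i
  · exact le_trans h (Finset.single_le_sum (f := m) (fun _ _ => Nat.zero_le _)
      (Finset.mem_univ (⟨0, hk⟩ : Fin k)))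

/-- Lemma 2.7 of the paper: assuming `k > 1` or `|μ¹| > 1`, the dimension
vector `v_μ` lies in `M_Γ` if and only if `r ≥ |μ^i| + μ^i_1` for all `i`. -/
theorem stmt9 {r k : ℕ} (hr : 1 ≤ r) (hk : 1 ≤ k) (s : Fin k → ℕ)
    (μ : ∀ i : Fin k, Fin (s i + 1) → ℕ)
    (hdec : ∀ i, ∀ a b : Fin (s i + 1), a ≤ b → μ i b ≤ μ i a)
    (hnz : ∀ i, 0 < ∑ f, μ i f)
    (hcond : 1 < k ∨ 1 < ∑ f, μ ⟨0, hk⟩ f) :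
    memM r k s (dimVec μ) ↔
      ∀ i : Fin k, (∑ f, μ i f) + μ i 0 ≤ r := by
  constructor
  · rintro ⟨-, -, -, h⟩ i
    have h0 := h (Sum.inr ⟨i, 0⟩)
    rw [sum_edges_inr, dimVec_inr] at h0
    have h1 := snTail_succ (μ i) 0
    have h2 := snTail_zero (μ i)
    simp only [Fin.val_zero, if_true] at h0 h1
    zify
    push_cast at h2
    linarith
  · intro h
    refine ⟨fun h0 => ?_, ?_, dimVec_connected hr hk s μ hnz, ?_⟩
    · exact one_ne_zero (α := ℤ) (congrFun h0 (Sum.inl ⟨0, hr⟩))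
    · rintro (l | ⟨i, j⟩)
      · exact zero_le_one
      · exact snTail_nonneg _ _
    · rintro (l | ⟨i, j⟩)
      · rw [sum_edges_inl]
        have := two_le_total hk (fun i => ∑ f, μ i f) hnz hcond
        have h1 : dimVec μ (Sum.inl l : SNVertex r k s) = 1 := rfl
        rw [h1]
        zify at this
        push_cast
        linarith
      · rw [sum_edges_inr, dimVec_inr]
        have h1 := snTail_succ (μ i) j
        by_cases hj : j.val = 0
        · have hj0 : j = 0 := Fin.ext hj
          subst hj0
          have h2 := snTail_zero (μ i)
          have h3 := h i
          zify at h3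
          push_cast at h2
          simp only [Fin.val_zero, if_true] at h1 ⊢
          linarith
        · have h2 := snTail_succ (μ i) ⟨j.val - 1, by omega⟩
          have h3 : (μ i j : ℤ) ≤ μ i ⟨j.val - 1, by omega⟩ := by
            exact_mod_cast hdec i _ _ (Fin.le_def.mpr (Nat.sub_le _ _))
          have h4 : j.val - 1 + 1 = j.val := by omega
          simp only [h4] at h2
          rw [if_neg hj]
          linarith
end

section
/- Let q be a prime power and r ≥ 3 an integer. The number of orbits of GL₂(F_q) acting on the set of functions f : {1,…,r} → ℙ¹(F_q) whose image has at least 3 elements equals Σ_{m=3}^{r} S(r,m) · C_m(q), where S(r,m) is the Stirling number of the second kind (the number of partitions of an r-element set into m nonempty blocks) and C_m(q) = (q−2)(q−3)⋯(q−(m−2)) (with C_3(q) = 1). -/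
/-!
Let `m` be the number of values of `f`. The function `f` is the same as a partition of `{1,…,r}`
into `m` blocks (its kernel) together with an injection of the set of blocks into the projective
line. The group acts on the injection only, and `PGL₂` is sharply `3`-transitive on the `q + 1`
points (`projGroup_transitive`, `projGroup_eq_one`). Hence, after fixing three blocks of each
partition, every orbit contains exactly one injection sending these blocks to `0`, `∞`, `1`
(`card_orbits_of_sharply_three_transitive`). The other `m - 3` blocks go injectively to the other
`q - 2` points, in `(q - 2)(q - 3)⋯(q - (m - 2)) = C_m(q)` ways.
-/

/-- The projective line `ℙ¹(F)`: the set of `1`-dimensional subspaces of `F²`. -/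
def ProjLine (F : Type) [Field F] : Type :=
  {V : Submodule F (Fin 2 → F) // Module.finrank F V = 1}

/-- The Stirling number of the second kind `S(r,m)`: the number of partitions
of an `r`-element set into `m` nonempty blocks. -/
noncomputable def stirling2 (r m : ℕ) : ℕ :=
  Nat.card {P : Finpartition (Finset.univ : Finset (Fin r)) // P.parts.card = m}

/-- `C_m(q) = (q−2)(q−3)⋯(q−(m−2))`, with `C₃(q) = 1`. -/
def Cm (q m : ℕ) : ℕ :=
  ∏ j ∈ Finset.Icc 2 (m - 2), (q - j)

open Finset

/-! ### Counting functions through their kernel partitions -/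

/-- Extending a partial injection already defined on three points amounts to choosing an injection
between the complements of the three points. -/
theorem card_embedding_extending {A Y : Type} [Finite A] [Finite Y] (e : Fin 3 ↪ A)
    (p : Fin 3 ↪ Y) :
    Nat.card {h : A ↪ Y // ∀ i, h (e i) = p i} =
      (Nat.card Y - 3).descFactorial (Nat.card A - 3) := by
  classical
  have := Fintype.ofFinite A
  have := Fintype.ofFinite Y
  let s : Fin 3 ⊕ ↥(Set.range e)ᶜ ≃ A :=
    ((Equiv.ofInjective e e.injective).sumCongr (Equiv.refl _)).trans (Equiv.Set.sumCompl _)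
  have hs : ∀ i, s (Sum.inl i) = e i := fun i => by simp [s]
  let E : {h : A ↪ Y // ∀ i, h (e i) = p i} ≃ (↥(Set.range e)ᶜ ↪ ↥(Set.range p)ᶜ) :=
    (((Equiv.embeddingCongr s.symm (Equiv.refl Y)).trans
      Equiv.sumEmbeddingEquivSigmaEmbeddingRestricted).subtypeEquiv (fun h => by
        rw [DFunLike.ext_iff]
        refine forall_congr' fun i => ?_
        rw [← hs i]
        rfl)).trans (Equiv.sigmaSubtype p)
  have h1 : Fintype.card ↥(Set.range e)ᶜ = Fintype.card A - 3 := by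
    rw [Fintype.card_compl_set, Set.card_range_of_injective e.injective, Fintype.card_fin]
  have h2 : Fintype.card ↥(Set.range p)ᶜ = Fintype.card Y - 3 := by
    rw [Fintype.card_compl_set, Set.card_range_of_injective p.injective, Fintype.card_fin]
  rw [Nat.card_congr E, Nat.card_eq_fintype_card, Fintype.card_embedding_eq, h1, h2,
    Nat.card_eq_fintype_card, Nat.card_eq_fintype_card]

/-- The block of `P` containing `n`, as an element of the type of blocks: the quotient map
`{1,…,r} → P`. -/
def toPart {r : ℕ} (P : Finpartition (univ : Finset (Fin r))) (n : Fin r) : P.parts :=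
  ⟨P.part n, P.part_mem.2 (mem_univ n)⟩

theorem toPart_surjective {r : ℕ} (P : Finpartition (univ : Finset (Fin r))) :
    Function.Surjective (toPart P) := by
  rintro ⟨t, ht⟩
  obtain ⟨a, -, ha⟩ := P.part_surjOn ht
  exact ⟨a, Subtype.ext ha⟩

theorem finpartition_ext_of_toPart {r : ℕ} {P Q : Finpartition (univ : Finset (Fin r))}
    (h : ∀ a b, toPart P a = toPart P b ↔ toPart Q a = toPart Q b) : P = Q := by
  have key : ∀ a, P.part a = Q.part a := fun a => by
    ext b
    have := h b a
    simp only [toPart, Subtype.mk.injEq] at this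
    rw [P.mem_part_iff_part_eq_part (mem_univ _) (mem_univ _),
      Q.mem_part_iff_part_eq_part (mem_univ _) (mem_univ _), this]
  ext t
  constructor
  · intro ht
    obtain ⟨a, -, rfl⟩ := P.part_surjOn ht
    rw [key]; exact Q.part_mem.2 (mem_univ _)
  · intro ht
    obtain ⟨a, -, rfl⟩ := Q.part_surjOn ht
    rw [← key]; exact P.part_mem.2 (mem_univ _)

/-- Every function factors as the quotient map onto the blocks of its kernel partition followed by
an injection. -/
theorem exists_factorization {Y : Type} {r : ℕ} (f : Fin r → Y) :
    ∃ (P : Finpartition (univ : Finset (Fin r))) (h : P.parts ↪ Y),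
      ∀ n, h (toPart P n) = f n := by
  classical
  let P := Finpartition.ofSetoid (Setoid.ker f)
  have hP : ∀ a b, toPart P a = toPart P b ↔ f a = f b := fun a b => by
    simp only [toPart, Subtype.mk.injEq]
    rw [← P.mem_part_iff_part_eq_part (mem_univ _) (mem_univ _),
      Finpartition.mem_part_ofSetoid_iff_rel]
    exact eq_comm
  have hinv := Function.surjInv_eq (toPart_surjective P)
  refine ⟨P, ⟨fun t => f (Function.surjInv (toPart_surjective P) t), fun t t' htt => ?_⟩,
    fun n => (hP _ _).1 (hinv _)⟩
  rw [← hinv t, ← hinv t']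
  exact (hP _ _).2 htt

theorem ncard_range_factorization {Y : Type} {r : ℕ} (P : Finpartition (univ : Finset (Fin r)))
    (h : P.parts ↪ Y) : (Set.range fun n => h (toPart P n)).ncard = #P.parts := by
  have : (Set.range fun n => h (toPart P n)) = Set.range h :=
    (toPart_surjective P).range_comp h
  rw [this, ← Set.image_univ, Set.ncard_image_of_injective _ h.injective, Set.ncard_univ,
    Nat.card_eq_fintype_card, Fintype.card_coe]

/-- A sum over partitions with at least three blocks of a quantity depending only on the number of
blocks; partitions are grouped by that number. -/
theorem sum_finpartition_eq (r : ℕ) (g : ℕ → ℕ) :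
    ∑ P : {P : Finpartition (univ : Finset (Fin r)) // 3 ≤ #P.parts}, g #P.1.parts =
      ∑ m ∈ Icc 3 r, stirling2 r m * g m := by
  classical
  rw [← Finset.sum_subtype (univ.filter fun P : Finpartition (univ : Finset (Fin r)) =>
      3 ≤ #P.parts) (by simp) (fun P => g #P.parts),
    ← Finset.sum_fiberwise_of_maps_to (t := Icc 3 r) (g := fun P => #P.parts)]
  · refine Finset.sum_congr rfl fun m hm => ?_
    rw [Finset.sum_congr rfl (g := fun _ => g m) (by
        intro P hP
        rw [(Finset.mem_filter.1 hP).2]), Finset.sum_const, smul_eq_mul, stirling2,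
      Nat.card_eq_fintype_card, Fintype.card_subtype, Finset.filter_filter]
    congr 2
    ext P
    have := (Finset.mem_Icc.1 hm).1
    simp only [mem_filter, mem_univ, true_and]
    omega
  · intro P hP
    rw [Finset.mem_Icc]
    exact ⟨(Finset.mem_filter.1 hP).2, by simpa using P.card_parts_le_card⟩

/-- Orbit count for a sharply `3`-transitive permutation group `H`. For each partition `P` with at
least three blocks fix three blocks `t P`; then every orbit of functions with kernel `P` contains
exactly one function sending these blocks to the base points `p`. -/
theorem card_orbits_of_sharply_three_transitive {Y : Type} [Finite Y]
    (H : Subgroup (Equiv.Perm Y)) (p : Fin 3 ↪ Y)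
    (htrans : ∀ e : Fin 3 ↪ Y, ∃ σ ∈ H, ∀ i, σ (e i) = p i)
    (hfix : ∀ σ ∈ H, (∀ i, σ (p i) = p i) → σ = 1) (r : ℕ) :
    Nat.card (Quot fun f f' : {f : Fin r → Y // 3 ≤ (Set.range f).ncard} =>
        ∃ σ ∈ H, ∀ n, f'.val n = σ (f.val n)) =
      ∑ m ∈ Icc 3 r, stirling2 r m * (Nat.card Y - 3).descFactorial (m - 3) := by
  classical
  have ht : ∀ P : {P : Finpartition (univ : Finset (Fin r)) // 3 ≤ #P.parts},
      Nonempty (Fin 3 ↪ P.1.parts) := fun P =>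
    Function.Embedding.nonempty_of_card_le (by simpa using P.2)
  let t := fun P => (ht P).some
  let N := Σ P : {P : Finpartition (univ : Finset (Fin r)) // 3 ≤ #P.parts},
    {h : P.1.parts ↪ Y // ∀ i, h (t P i) = p i}
  let Φ : N → Quot fun f f' : {f : Fin r → Y // 3 ≤ (Set.range f).ncard} =>
        ∃ σ ∈ H, ∀ n, f'.val n = σ (f.val n) := fun x =>
    Quot.mk _ ⟨fun n => x.2.1 (toPart x.1.1 n), by
      rw [ncard_range_factorization]; exact x.1.2⟩
  have hΦ : Function.Bijective Φ := by
    constructor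
    · rintro ⟨⟨P, hP⟩, h, hh⟩ ⟨⟨Q, hQ⟩, k, hk⟩ hxy
      obtain ⟨σ, hσ, hσn⟩ := (Equivalence.quot_mk_eq_iff ⟨fun f => ⟨1, H.one_mem, fun n => rfl⟩,
        fun {f f'} ⟨σ, hσ, hf⟩ => ⟨σ⁻¹, H.inv_mem hσ, fun n => by simp [hf n]⟩,
        fun {f f' f''} ⟨σ, hσ, hf⟩ ⟨τ, hτ, hf'⟩ =>
          ⟨τ * σ, H.mul_mem hτ hσ, fun n => by simp [hf n, hf' n]⟩⟩ _ _).1 hxy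
      dsimp only at hσn hh hk
      obtain rfl : P = Q := finpartition_ext_of_toPart fun a b => by
        rw [← k.injective.eq_iff, hσn, hσn, σ.injective.eq_iff, h.injective.eq_iff]
      have hkh : ∀ x, k x = σ (h x) := fun x => by
        obtain ⟨n, rfl⟩ := toPart_surjective P x
        exact hσn n
      have : σ = 1 := hfix σ hσ fun i => by
        conv_lhs => rw [← hh i]
        rw [← hkh, hk]
      subst this
      obtain rfl : h = k := by ext x; exact (hkh x).symm
      rfl
    · rintro ⟨f, hf⟩
      obtain ⟨P, h, hPh⟩ := exists_factorization f
      have hP : 3 ≤ #P.parts := by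
        rw [← ncard_range_factorization P h]
        simpa only [hPh] using hf
      obtain ⟨σ, hσ, hσp⟩ := htrans ((t ⟨P, hP⟩).trans h)
      refine ⟨⟨⟨P, hP⟩, h.trans σ.toEmbedding, hσp⟩, (Quot.sound ⟨σ, hσ, fun n => ?_⟩).symm⟩
      simp [hPh]
  rw [← Nat.card_eq_of_bijective Φ hΦ, Nat.card_sigma,
    ← sum_finpartition_eq r fun m => (Nat.card Y - 3).descFactorial (m - 3)]
  refine Finset.sum_congr rfl fun P _ => ?_
  rw [card_embedding_extending, Nat.card_eq_fintype_card (α := P.1.parts), Fintype.card_coe]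

/-- The truncated subtractions agree on both sides, so no relation between `q` and `m` is needed. -/
theorem descFactorial_eq_Cm (q m : ℕ) (hm : 3 ≤ m) :
    (q + 1 - 3).descFactorial (m - 3) = Cm q m := by
  rw [Nat.descFactorial_eq_prod_range, Cm, ← Finset.Ico_add_one_right_eq_Icc,
    Finset.prod_Ico_eq_prod_range]
  refine Finset.prod_congr (by rw [show m - 2 + 1 - 2 = m - 3 by omega]) fun i _ => by omega

/-! ### `PGL₂` is sharply `3`-transitive on the projective line -/

section PGL

theorem card_projLine (F : Type) [Field F] [Fintype F] :
    Nat.card (ProjLine F) = Fintype.card F + 1 := by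
  rw [← Nat.card_eq_fintype_card, ← Projectivization.card_of_finrank_two F (Fin 2 → F) (by simp)]
  exact (Nat.card_congr (Projectivization.equivSubmodule F (Fin 2 → F))).symm

variable {F : Type} [Field F]

/-- The point of the projective line spanned by a nonzero vector. -/
def ProjLine.mk (v : Fin 2 → F) (hv : v ≠ 0) : ProjLine F :=
  ⟨Submodule.span F {v}, finrank_span_singleton hv⟩

theorem ProjLine.exists_mk (x : ProjLine F) : ∃ v hv, x = ProjLine.mk v hv := by
  obtain ⟨x, rfl⟩ := (Projectivization.equivSubmodule F (Fin 2 → F)).surjective x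
  induction x using Projectivization.ind with
  | h v hv => exact ⟨v, hv, rfl⟩

theorem ProjLine.mk_eq_mk {v w : Fin 2 → F} {hv : v ≠ 0} {hw : w ≠ 0} :
    ProjLine.mk v hv = ProjLine.mk w hw ↔ ∃ c : F, w = c • v := by
  constructor
  · intro h
    have : w ∈ Submodule.span F {v} := by
      rw [show Submodule.span F {v} = Submodule.span F {w} from congrArg Subtype.val h]
      exact Submodule.mem_span_singleton_self w
    obtain ⟨c, hc⟩ := Submodule.mem_span_singleton.1 this
    exact ⟨c, hc.symm⟩
  · rintro ⟨c, rfl⟩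
    have hc : c ≠ 0 := fun h => hw (by simp [h])
    exact Subtype.ext (Submodule.span_singleton_smul_eq hc.isUnit v).symm

theorem ProjLine.mk_eq_mk_iff_det {v w : Fin 2 → F} {hv : v ≠ 0} {hw : w ≠ 0} :
    ProjLine.mk v hv = ProjLine.mk w hw ↔ v 0 * w 1 - v 1 * w 0 = 0 := by
  rw [ProjLine.mk_eq_mk]
  constructor
  · rintro ⟨c, rfl⟩
    simp; ring
  · intro h
    by_cases h0 : v 0 = 0
    · have h1 : v 1 ≠ 0 := fun h1 => hv (by ext i; fin_cases i <;> simp [h0, h1])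
      refine ⟨w 1 / v 1, ?_⟩
      ext i; fin_cases i
      · simp [h0] at h ⊢; tauto
      · simp; field_simp
    · refine ⟨w 0 / v 0, ?_⟩
      ext i; fin_cases i
      · simp; field_simp
      · simp; field_simp; linear_combination h

theorem finrank_map_mulVecLin {A : Matrix (Fin 2) (Fin 2) F} (hA : IsUnit A)
    (V : Submodule F (Fin 2 → F)) :
    Module.finrank F (V.map A.mulVecLin) = Module.finrank F V :=
  (Submodule.equivMapOfInjective A.mulVecLin
    (Matrix.mulVec_injective_iff_isUnit.2 hA) V).finrank_eq.symm

/-- The permutations of the projective line induced by invertible matrices. -/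
def projGroup (F : Type) [Field F] : Subgroup (Equiv.Perm (ProjLine F)) where
  carrier := {σ | ∃ A : Matrix (Fin 2) (Fin 2) F, IsUnit A ∧
    ∀ x, (σ x).val = Submodule.map A.mulVecLin x.val}
  one_mem' := ⟨1, isUnit_one, fun x => by simp⟩
  mul_mem' := by
    rintro σ τ ⟨A, hA, hσ⟩ ⟨B, hB, hτ⟩
    refine ⟨A * B, hA.mul hB, fun x => ?_⟩
    rw [Matrix.mulVecLin_mul, Submodule.map_comp, ← hτ, ← hσ]; rfl
  inv_mem' := by
    rintro σ ⟨A, hA, hσ⟩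
    have hA' := (Matrix.isUnit_iff_isUnit_det A).1 hA
    refine ⟨A⁻¹, Matrix.isUnit_nonsing_inv_iff.2 hA, fun x => ?_⟩
    have h := hσ (σ⁻¹ x)
    rw [show σ (σ⁻¹ x) = x from σ.apply_symm_apply x] at h
    rw [h, ← Submodule.map_comp, ← Matrix.mulVecLin_mul, Matrix.nonsing_inv_mul _ hA']
    simp

theorem exists_mem_projGroup {A : Matrix (Fin 2) (Fin 2) F} (hA : IsUnit A) :
    ∃ σ ∈ projGroup F, ∀ x, (σ x).val = Submodule.map A.mulVecLin x.val := by
  have hA' := (Matrix.isUnit_iff_isUnit_det A).1 hA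
  let σ : Equiv.Perm (ProjLine F) :=
    { toFun := fun x => ⟨x.1.map A.mulVecLin, by rw [finrank_map_mulVecLin hA, x.2]⟩
      invFun := fun x => ⟨x.1.map A⁻¹.mulVecLin, by
        rw [finrank_map_mulVecLin (Matrix.isUnit_nonsing_inv_iff.2 hA), x.2]⟩
      left_inv := fun x => Subtype.ext (by
        simp only
        rw [← Submodule.map_comp, ← Matrix.mulVecLin_mul, Matrix.nonsing_inv_mul _ hA']
        simp)
      right_inv := fun x => Subtype.ext (by
        simp only
        rw [← Submodule.map_comp, ← Matrix.mulVecLin_mul, Matrix.mul_nonsing_inv _ hA']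
        simp) }
  exact ⟨σ, ⟨A, hA, fun _ => rfl⟩, fun _ => rfl⟩

theorem map_mk_eq_iff {A : Matrix (Fin 2) (Fin 2) F} {v w : Fin 2 → F} {hv : v ≠ 0} {hw : w ≠ 0}
    (hAv : A.mulVec v ≠ 0) :
    (ProjLine.mk w hw).val = Submodule.map A.mulVecLin (ProjLine.mk v hv).val ↔
      w 0 * (A.mulVec v) 1 - w 1 * (A.mulVec v) 0 = 0 := by
  rw [← ProjLine.mk_eq_mk_iff_det (hv := hw) (hw := hAv)]
  have : Submodule.map A.mulVecLin (ProjLine.mk v hv).val = (ProjLine.mk _ hAv).val := by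
    simp [ProjLine.mk, Submodule.map_span]
  rw [this]
  exact Subtype.val_injective.eq_iff

/-- The vectors `e₀`, `e₁`, `e₀ + e₁`, which span the three base points of the projective line. -/
def baseVec : Fin 3 → Fin 2 → F := ![![1, 0], ![0, 1], ![1, 1]]

theorem baseVec_ne_zero (i : Fin 3) : (baseVec i : Fin 2 → F) ≠ 0 := by
  intro h
  have h0 := congrFun h 0
  have h1 := congrFun h 1
  fin_cases i <;> simp [baseVec] at h0 h1

/-- The points `0`, `∞`, `1` of the projective line. -/
def basePoint (F : Type) [Field F] : Fin 3 ↪ ProjLine F where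
  toFun i := ProjLine.mk (baseVec i) (baseVec_ne_zero i)
  inj' i j h := by
    simp only [ProjLine.mk_eq_mk_iff_det] at h
    fin_cases i <;> fin_cases j <;> simp [baseVec] at h ⊢

/-- Any three distinct points are moved to the base points by some element of `PGL₂`. -/
theorem projGroup_transitive (e : Fin 3 ↪ ProjLine F) :
    ∃ σ ∈ projGroup F, ∀ i, σ (e i) = basePoint F i := by
  obtain ⟨u, hu, hu'⟩ := (e 0).exists_mk
  obtain ⟨v, hv, hv'⟩ := (e 1).exists_mk
  obtain ⟨w, hw, hw'⟩ := (e 2).exists_mk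
  have huv : u 0 * v 1 - u 1 * v 0 ≠ 0 := by
    rw [ne_eq, ← ProjLine.mk_eq_mk_iff_det (hv := hu) (hw := hv), ← hu', ← hv', e.injective.eq_iff]
    decide
  have huw : u 0 * w 1 - u 1 * w 0 ≠ 0 := by
    rw [ne_eq, ← ProjLine.mk_eq_mk_iff_det (hv := hu) (hw := hw), ← hu', ← hw', e.injective.eq_iff]
    decide
  have hwv : w 0 * v 1 - w 1 * v 0 ≠ 0 := by
    rw [ne_eq, ← ProjLine.mk_eq_mk_iff_det (hv := hw) (hw := hv), ← hw', ← hv', e.injective.eq_iff]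
    decide
  -- By Cramer's rule `det(u,v) w = det(w,v) u + det(u,w) v`; the columns of `A` are these two terms.
  obtain ⟨a, ha⟩ : ∃ a, a = w 0 * v 1 - w 1 * v 0 := ⟨_, rfl⟩
  obtain ⟨b, hb⟩ : ∃ b, b = u 0 * w 1 - u 1 * w 0 := ⟨_, rfl⟩
  let A : Matrix (Fin 2) (Fin 2) F := !![a * u 0, b * v 0; a * u 1, b * v 1]
  have hA : IsUnit A := by
    rw [Matrix.isUnit_iff_isUnit_det, isUnit_iff_ne_zero, Matrix.det_fin_two_of,
      show a * u 0 * (b * v 1) - b * v 0 * (a * u 1) = a * b * (u 0 * v 1 - u 1 * v 0) by ring]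
    rw [← ha] at hwv
    rw [← hb] at huw
    positivity
  obtain ⟨σ, hσ, hσA⟩ := exists_mem_projGroup hA
  have hne : ∀ i, A.mulVec (baseVec i) ≠ 0 := fun i h =>
    baseVec_ne_zero i (Matrix.mulVec_injective_iff_isUnit.2 hA (by simpa using h))
  have key : ∀ i, e i = σ (basePoint F i) := by
    intro i
    apply Subtype.ext
    rw [hσA]
    fin_cases i
    · simp only [Fin.zero_eta, hu']
      refine (map_mk_eq_iff (hv := baseVec_ne_zero 0) (hne 0)).2 ?_
      simp [A, baseVec, Matrix.mulVec, dotProduct, Fin.sum_univ_two]; ring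
    · simp only [Fin.mk_one, hv']
      refine (map_mk_eq_iff (hv := baseVec_ne_zero 1) (hne 1)).2 ?_
      simp [A, baseVec, Matrix.mulVec, dotProduct, Fin.sum_univ_two]; ring
    · simp only [Fin.reduceFinMk, hw']
      refine (map_mk_eq_iff (hv := baseVec_ne_zero 2) (hne 2)).2 ?_
      simp [A, baseVec, Matrix.mulVec, dotProduct, Fin.sum_univ_two, ha, hb]; ring
  exact ⟨σ⁻¹, inv_mem hσ, fun i => by
    rw [key]
    exact σ.symm_apply_apply _⟩

/-- A matrix fixing the lines through `e₀`, `e₁` and `e₀ + e₁` is scalar. -/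
theorem projGroup_eq_one (σ : Equiv.Perm (ProjLine F)) (hσ : σ ∈ projGroup F)
    (hfix : ∀ i, σ (basePoint F i) = basePoint F i) : σ = 1 := by
  obtain ⟨A, hA, hσA⟩ := hσ
  have hne : ∀ v ≠ 0, A.mulVec v ≠ 0 := fun v hv h =>
    hv (Matrix.mulVec_injective_iff_isUnit.2 hA (by simpa using h))
  have key : ∀ i, (baseVec i : Fin 2 → F) 0 * (A.mulVec (baseVec i)) 1
      - (baseVec i : Fin 2 → F) 1 * (A.mulVec (baseVec i)) 0 = 0 := fun i => by
    refine (map_mk_eq_iff (hv := baseVec_ne_zero i) (hw := baseVec_ne_zero i)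
      (hne _ (baseVec_ne_zero i))).1 ?_
    have := hσA (basePoint F i)
    rwa [hfix] at this
  have h0 := key 0
  have h1 := key 1
  have h2 := key 2
  simp [baseVec, Matrix.mulVec, dotProduct, Fin.sum_univ_two] at h0 h1 h2
  ext1 x
  apply Subtype.ext
  obtain ⟨v, hv, rfl⟩ := x.exists_mk
  rw [hσA, Equiv.Perm.one_apply]
  refine ((map_mk_eq_iff (hne v hv)).2 ?_).symm
  simp only [Matrix.mulVec, dotProduct, Fin.sum_univ_two]
  rw [h0, h1] at h2 ⊢
  linear_combination v 0 * v 1 * h2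

end PGL

/-- The number of orbits of `GL₂(F_q)` acting by post-composition on functions
`f : {1,…,r} → ℙ¹(F_q)` whose image has at least `3` elements equals
`Σ_{m=3}^{r} S(r,m) C_m(q)`. -/
theorem stmt12 (q r : ℕ) (hr : 3 ≤ r) (F : Type) [Field F] [Fintype F]
    (hF : Fintype.card F = q) :
    Nat.card (Quot (fun (f f' :
        {f : Fin r → ProjLine F // 3 ≤ (Set.range f).ncard}) =>
      ∃ A : Matrix (Fin 2) (Fin 2) F, IsUnit A ∧
        ∀ n : Fin r, (f'.val n).val = Submodule.map A.mulVecLin (f.val n).val)) =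
    ∑ m ∈ Finset.Icc 3 r, stirling2 r m * Cm q m := by
  have hrel : (fun (f f' : {f : Fin r → ProjLine F // 3 ≤ (Set.range f).ncard}) =>
      ∃ A : Matrix (Fin 2) (Fin 2) F, IsUnit A ∧
        ∀ n : Fin r, (f'.val n).val = Submodule.map A.mulVecLin (f.val n).val) =
      fun f f' => ∃ σ ∈ projGroup F, ∀ n, f'.val n = σ (f.val n) := by
    ext f f'
    constructor
    · rintro ⟨A, hA, h⟩
      obtain ⟨σ, hσ, hσA⟩ := exists_mem_projGroup hA
      exact ⟨σ, hσ, fun n => Subtype.ext (by rw [h, hσA])⟩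
    · rintro ⟨σ, ⟨A, hA, hσA⟩, h⟩
      exact ⟨A, hA, fun n => by rw [h, hσA]⟩
  have hcard : Nat.card (ProjLine F) = q + 1 := by rw [card_projLine, hF]
  have : Finite (ProjLine F) := Nat.finite_of_card_ne_zero (by omega)
  rw [hrel, card_orbits_of_sharply_three_transitive (projGroup F) (basePoint F)
    projGroup_transitive projGroup_eq_one r, hcard]
  refine Finset.sum_congr rfl fun m hm => ?_
  rw [descFactorial_eq_Cm q m (Finset.mem_Icc.1 hm).1]
end
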